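/- There is a constant C = C(T), depending only on the data of T, such that for every S ∈ Γ* there is N with: for all n ≥ N, cap_p T ≤ C ∫_S M_{C/n}(ρ₀^{p−1}) dH, where M_r denotes the restricted Hardy–Littlewood maximal operator at scale r and ρ₀ is the minimizer of cap_p T in F. -/

import Mathlib

open MeasureTheory Metric Set Filter Topology
open scoped ENNReal NNReal unitInterval

noncomputable section

namespace Duality

/-! ### Rectifiable curves, line integrals and upper gradients

A rectifiable path is encoded by its arclength-type parametrization: a `1`-Lipschitz
map defined on a compact interval `[a, b]`.  The line integral `∫_γ ρ ds` of a
nonnegative Borel function is then the Lebesgue integral of `ρ ∘ γ` over `[a, b]`. -/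

structure UPath (X : Type*) [PseudoMetricSpace X] where
  a : ℝ
  b : ℝ
  hab : a ≤ b
  toFun : ℝ → X
  lip : LipschitzOnWith 1 toFun (Set.Icc a b)

namespace UPath

variable {X : Type*} [PseudoMetricSpace X]

/-- starting point of the path -/
def start (γ : UPath X) : X := γ.toFun γ.a

/-- end point of the path -/
def finish (γ : UPath X) : X := γ.toFun γ.b

/-- The line integral `∫_γ ρ ds`. -/
def integral (γ : UPath X) (ρ : X → ℝ≥0∞) : ℝ≥0∞ :=
  ∫⁻ t in Set.Icc γ.a γ.b, ρ (γ.toFun t)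

/-- The image (trace) `|γ|` of the path. -/
def trace (γ : UPath X) : Set X := γ.toFun '' Set.Icc γ.a γ.b

/-- The length of the path. -/
def length (γ : UPath X) : ℝ≥0∞ := eVariationOn γ.toFun (Set.Icc γ.a γ.b)

/-- The path stays inside the set `W`. -/
def InSet (γ : UPath X) (W : Set X) : Prop := ∀ t ∈ Set.Icc γ.a γ.b, γ.toFun t ∈ W

/-- The reparametrization of a rectifiable path as a `Path` (continuous map from `[0,1]`). -/
def toPath (γ : UPath X) : Path γ.start γ.finish where
  toFun := fun t => γ.toFun (γ.a + (t : ℝ) * (γ.b - γ.a))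
  continuous_toFun := by
    have hmem : ∀ t : unitInterval, γ.a + (t : ℝ) * (γ.b - γ.a) ∈ Set.Icc γ.a γ.b := by
      intro t
      obtain ⟨ht0, ht1⟩ := t.2
      constructor
      · nlinarith [γ.hab]
      · nlinarith [γ.hab]
    exact γ.lip.continuousOn.comp_continuous (by continuity) hmem
  source' := by simp [start]
  target' := by simp [finish]

end UPath

/-- `ρ` is an upper gradient of `u`. -/
def IsUpperGradient {X : Type*} [PseudoMetricSpace X] {Y : Type*} [PseudoEMetricSpace Y]
    (u : X → Y) (ρ : X → ℝ≥0∞) : Prop :=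
  ∀ γ : UPath X, edist (u γ.start) (u γ.finish) ≤ γ.integral ρ

/-- The `p`-modulus of a family of (rectifiable) paths. -/
def pathMod {X : Type*} [PseudoMetricSpace X] [MeasurableSpace X]
    (μ : Measure X) (p : ℝ) (Γ : Set (UPath X)) : ℝ≥0∞ :=
  ⨅ (ρ : X → ℝ≥0∞) (_ : Measurable ρ ∧ ∀ γ ∈ Γ, 1 ≤ γ.integral ρ),
    ∫⁻ x, ρ x ^ p ∂μ

/-- `ρ` is a `p`-weak upper gradient of `u`: the upper gradient inequality may fail
only on a path family of zero `p`-modulus. -/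
def IsWeakUpperGradient {X : Type*} [PseudoMetricSpace X] [MeasurableSpace X]
    {Y : Type*} [PseudoEMetricSpace Y] (μ : Measure X) (p : ℝ)
    (u : X → Y) (ρ : X → ℝ≥0∞) : Prop :=
  pathMod μ p {γ : UPath X | ¬ edist (u γ.start) (u γ.finish) ≤ γ.integral ρ} = 0

/-- `ρ` is a `p`-weak upper gradient of `u` in the subset `U`. -/
def IsWeakUpperGradientOn {X : Type*} [PseudoMetricSpace X] [MeasurableSpace X]
    {Y : Type*} [PseudoEMetricSpace Y] (μ : Measure X) (p : ℝ) (U : Set X)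
    (u : X → Y) (ρ : X → ℝ≥0∞) : Prop :=
  pathMod (μ.restrict U) p
    {γ : UPath X | γ.InSet U ∧ ¬ edist (u γ.start) (u γ.finish) ≤ γ.integral ρ} = 0

/-- `ρ` is the minimal `p`-weak upper gradient of `u`: it is a `p`-integrable `p`-weak
upper gradient which is `μ`-a.e. dominated by every other one. -/
def IsMinimalWeakUpperGradient {X : Type*} [PseudoMetricSpace X] [MeasurableSpace X]
    {Y : Type*} [PseudoEMetricSpace Y] (μ : Measure X) (p : ℝ)
    (u : X → Y) (ρ : X → ℝ≥0∞) : Prop :=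
  Measurable ρ ∧ IsWeakUpperGradient μ p u ρ ∧ (∫⁻ x, ρ x ^ p ∂μ) < ⊤ ∧
    ∀ ρ' : X → ℝ≥0∞, Measurable ρ' → IsWeakUpperGradient μ p u ρ' →
      (∫⁻ x, ρ' x ^ p ∂μ) < ⊤ → ∀ᵐ x ∂μ, ρ x ≤ ρ' x

/-! ### Doubling measures, Poincaré inequalities, Ahlfors regularity -/

/-- `μ` is a doubling (Borel) measure with doubling constant `Cμ`:
`0 < μ(2B) ≤ Cμ · μ(B) < ∞` for every ball `B` of radius `r < diam T`. -/
def IsDoubling {X : Type*} [MetricSpace X] [MeasurableSpace X]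
    (μ : Measure X) (Cμ : ℝ≥0∞) : Prop :=
  ∀ (x : X) (r : ℝ), 0 < r → r < Metric.diam (Set.univ : Set X) →
    0 < μ (ball x (2 * r)) ∧ μ (ball x (2 * r)) ≤ Cμ * μ (ball x r) ∧
      Cμ * μ (ball x r) < ⊤

/-- `(X, d, μ)` supports a weak `1`-Poincaré inequality with constants `CP`, `lP`:
`⨍_B |u - u_B| dμ ≤ CP · diam B · ⨍_{lP·B} ρ dμ` for every locally integrable `u`
and every upper gradient `ρ` of `u`, and balls have positive finite measure. -/
def SupportsPoincare {X : Type*} [MetricSpace X] [MeasurableSpace X]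
    (μ : Measure X) (CP lP : ℝ) : Prop :=
  (∀ (x : X) (r : ℝ), 0 < r → 0 < μ (ball x r) ∧ μ (ball x r) < ⊤) ∧
  ∀ (u : X → ℝ) (ρ : X → ℝ≥0∞), LocallyIntegrable u μ → Measurable ρ →
    IsUpperGradient u ρ → ∀ (x : X) (r : ℝ), 0 < r →
      (∫⁻ y in ball x r, ENNReal.ofReal |u y - ⨍ z in ball x r, u z ∂μ| ∂μ) /
          μ (ball x r) ≤
        ENNReal.ofReal (CP * Metric.diam (ball x r)) *
          ((∫⁻ y in ball x (lP * r), ρ y ∂μ) / μ (ball x (lP * r)))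

/-- `μ` is Ahlfors `q`-regular with constants `0 < aA ≤ AA`. -/
def IsAhlforsRegular {X : Type*} [MetricSpace X] [MeasurableSpace X]
    (μ : Measure X) (q aA AA : ℝ) : Prop :=
  0 < aA ∧ aA ≤ AA ∧
    ∀ (x : X) (r : ℝ), 0 < r → r < Metric.diam (Set.univ : Set X) →
      ENNReal.ofReal (aA * r ^ q) ≤ μ (ball x r) ∧
        μ (ball x r) ≤ ENNReal.ofReal (AA * r ^ q)

/-! ### The circle `ℝ/ℤ`, loops and degree -/

lemma intCast_coe_eq_zero (k : ℤ) : ((k : ℝ) : UnitAddCircle) = 0 :=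
  (AddCircle.coe_eq_zero_iff _).mpr ⟨k, by simp⟩

/-- The standard loop of degree `k` in `ℝ/ℤ` based at `y`: `t ↦ y + [k t]`. -/
def stdLoop (k : ℤ) (y : UnitAddCircle) : Path y y where
  toFun := fun t => y + (((k : ℝ) * (t : ℝ) : ℝ) : UnitAddCircle)
  continuous_toFun := by
    refine continuous_const.add ?_
    exact (AddCircle.continuous_mk' 1).comp (by continuity)
  source' := by simp
  target' := by
    have h1 : ((1 : unitInterval) : ℝ) = 1 := rfl
    have h : (((k : ℝ) * ((1 : unitInterval) : ℝ) : ℝ) : UnitAddCircle) = 0 := by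
      rw [h1, mul_one]; exact intCast_coe_eq_zero k
    simp [h]

/-- Concatenation of `n` copies of a loop. -/
def loopPow {X : Type*} [TopologicalSpace X] {x : X} (γ : Path x x) : ℕ → Path x x
  | 0 => Path.refl x
  | n + 1 => (loopPow γ n).trans γ

/-- A loop `γ` based at `x` has degree 1 (relative to the chosen generator `α₀` based
at `x₀`) if it is loop-homotopic to a conjugate `η * α₀ * η⁻¹` of `α₀`. -/
def IsDegreeOneLoop {T : Type*} [TopologicalSpace T] (x₀ : T) (α₀ : Path x₀ x₀)
    {x : T} (γ : Path x x) : Prop :=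
  ∃ η : Path x x₀, Path.Homotopic γ (η.trans (α₀.trans η.symm))

/-- A map `f : T → ℝ/ℤ` has degree `k`: it pushes every degree-1 loop based at `x`
to a loop which is loop-homotopic to `[f x] + k·β`, `β (t) = [t]`. -/
def HasDegree {T : Type*} [TopologicalSpace T] (x₀ : T) (α₀ : Path x₀ x₀)
    (f : T → UnitAddCircle) (k : ℤ) : Prop :=
  ∃ hf : Continuous f, ∀ (x : T) (γ : Path x x), IsDegreeOneLoop x₀ α₀ γ →
    Path.Homotopic (γ.map hf) (stdLoop k (f x))

/-- The class of `α₀` generates `π₁(T, x₀) ≅ ℤ`. -/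
def IsGenerator {T : Type*} [TopologicalSpace T] (x₀ : T) (α₀ : Path x₀ x₀) : Prop :=
  Function.Bijective fun k : ℤ =>
    (FundamentalGroup.fromPath (X := TopCat.of T) ⟦α₀⟧ : FundamentalGroup (TopCat.of T) x₀) ^ k

/-- `T` is semilocally simply connected. -/
def SemilocallySimplyConnected (T : Type*) [TopologicalSpace T] : Prop :=
  ∀ x : T, ∃ U ∈ 𝓝 x, ∀ γ : Path x x, (∀ t, γ t ∈ U) → Path.Homotopic γ (Path.refl x)

/-- `f` is a Lipschitz map of degree 1. -/
def DegOneLip {T : Type*} [MetricSpace T] (x₀ : T) (α₀ : Path x₀ x₀)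
    (f : T → UnitAddCircle) : Prop :=
  (∃ L : ℝ≥0, LipschitzWith L f) ∧ HasDegree x₀ α₀ f 1

/-! ### Capacity and surface modulus -/

/-- The degree 1 `p`-capacity of `T`, defined through minimal `p`-weak upper gradients:
the infimum of `∫ ρ^p dμ` over `p`-weak upper gradients `ρ` of Lipschitz degree-1 maps. -/
def cap {T : Type*} [MetricSpace T] [MeasurableSpace T] (μ : Measure T) (p : ℝ)
    (x₀ : T) (α₀ : Path x₀ x₀) : ℝ≥0∞ :=
  ⨅ (f : T → UnitAddCircle) (_ : DegOneLip x₀ α₀ f) (ρ : T → ℝ≥0∞)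
    (_ : Measurable ρ ∧ IsWeakUpperGradient μ p f ρ),
      ∫⁻ x, ρ x ^ p ∂μ

/-- The pointwise Lipschitz constant `Lip f (x)`. -/
def pLip {T : Type*} [MetricSpace T] (f : T → UnitAddCircle) (x : T) : ℝ≥0∞ :=
  Filter.limsup
    (fun r : ℝ => ⨆ y ∈ ball x r, edist (f x) (f y) / ENNReal.ofReal r) (𝓝[>] (0 : ℝ))

/-- The degree 1 `p`-capacity of `T`, defined through pointwise Lipschitz constants. -/
def capLip {T : Type*} [MetricSpace T] [MeasurableSpace T] (μ : Measure T) (p : ℝ)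
    (x₀ : T) (α₀ : Path x₀ x₀) : ℝ≥0∞ :=
  ⨅ (f : T → UnitAddCircle) (_ : DegOneLip x₀ α₀ f), ∫⁻ x, pLip f x ^ p ∂μ

/-- The codimension 1 spherical Hausdorff measure, as a set function:
`H(A) = sup_{δ>0} inf { ∑ μ(B_i)/r_i }`, the infimum being over countable covers of `A`
by balls `B_i` of radii `r_i ≤ δ`. -/
def codimH {T : Type*} [MetricSpace T] [MeasurableSpace T] (μ : Measure T)
    (A : Set T) : ℝ≥0∞ :=
  ⨆ (δ : ℝ) (_ : 0 < δ),
    ⨅ (c : ℕ → T) (r : ℕ → ℝ) (_ : ∀ i, r i ≤ δ)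
      (_ : A ⊆ ⋃ i, ball (c i) (r i)),
        ∑' i, μ (ball (c i) (r i)) / ENNReal.ofReal (r i)

/-- The integral `∫_S g dH` of `g ≥ 0` over `S` against the codimension 1 Hausdorff
measure, via the layer-cake (Choquet) formula. -/
def choquetIntegral {T : Type*} [MetricSpace T] [MeasurableSpace T] (μ : Measure T)
    (S : Set T) (g : T → ℝ≥0∞) : ℝ≥0∞ :=
  ∫⁻ t in Set.Ioi (0 : ℝ), codimH μ {x | x ∈ S ∧ ENNReal.ofReal t < g x}

/-- The family `Γ*` of all level sets `φ⁻¹[0]` of finite codimension 1 Hausdorff measure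
of continuous degree-1 maps `φ : T → ℝ/ℤ`. -/
def Surfaces {T : Type*} [MetricSpace T] [MeasurableSpace T] (μ : Measure T)
    (x₀ : T) (α₀ : Path x₀ x₀) : Set (Set T) :=
  {S | ∃ φ : T → UnitAddCircle, HasDegree x₀ α₀ φ 1 ∧ S = φ ⁻¹' {0} ∧ codimH μ S < ⊤}

/-- The surface `q`-modulus of a family of surfaces, the surfaces being equipped with the
codimension 1 Hausdorff measure. -/
def surfModOf {T : Type*} [MetricSpace T] [MeasurableSpace T] (μ : Measure T) (q : ℝ)
    (𝒮 : Set (Set T)) : ℝ≥0∞ :=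
  ⨅ (ρ : T → ℝ≥0∞) (_ : Measurable ρ ∧ ∀ S ∈ 𝒮, 1 ≤ choquetIntegral μ S ρ),
    ∫⁻ x, ρ x ^ q ∂μ

/-- The surface modulus `mod_q T`. -/
def surfMod {T : Type*} [MetricSpace T] [MeasurableSpace T] (μ : Measure T) (q : ℝ)
    (x₀ : T) (α₀ : Path x₀ x₀) : ℝ≥0∞ :=
  surfModOf μ q (Surfaces μ x₀ α₀)

/-- The family `Γ*` with the `(q-1)`-dimensional Hausdorff measure instead. -/
def SurfacesH {T : Type*} [MetricSpace T] [MeasurableSpace T] [BorelSpace T] (q : ℝ)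
    (x₀ : T) (α₀ : Path x₀ x₀) : Set (Set T) :=
  {S | ∃ φ : T → UnitAddCircle, HasDegree x₀ α₀ φ 1 ∧ S = φ ⁻¹' {0} ∧ μH[q - 1] S < ⊤}

/-- The surface modulus `mod_q T` defined through the `(q-1)`-dimensional Hausdorff
measures `H^{q-1} ⌞ S`, `S ∈ Γ*`. -/
def surfModH {T : Type*} [MetricSpace T] [MeasurableSpace T] [BorelSpace T]
    (μ : Measure T) (q pstar : ℝ) (x₀ : T) (α₀ : Path x₀ x₀) : ℝ≥0∞ :=
  ⨅ (ρ : T → ℝ≥0∞)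
    (_ : Measurable ρ ∧ ∀ S ∈ SurfacesH (T := T) q x₀ α₀, 1 ≤ ∫⁻ x in S, ρ x ∂μH[q - 1]),
      ∫⁻ x, ρ x ^ pstar ∂μ

/-- The standing assumptions 2.1. -/
def Standing {T : Type*} [MetricSpace T] [MeasurableSpace T] (μ : Measure T)
    (Cμ : ℝ≥0∞) (CP lP : ℝ) (x₀ : T) (α₀ : Path x₀ x₀) : Prop :=
  IsDoubling μ Cμ ∧ SupportsPoincare μ CP lP ∧ SemilocallySimplyConnected T ∧
    IsGenerator x₀ α₀ ∧ ∃ f : T → UnitAddCircle, DegOneLip x₀ α₀ f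

/-! ### The universal cover -/

/-- `π` is a local isometry. -/
def IsLocalIsometry {X Y : Type*} [MetricSpace X] [MetricSpace Y] (π : X → Y) : Prop :=
  ∀ x : X, ∃ ε : ℝ, 0 < ε ∧
    ∀ y ∈ ball x ε, ∀ z ∈ ball x ε, dist (π y) (π z) = dist y z

/-- `(T̃, π)` is the universal cover of `T`, with `T̃` carrying the length metric pulled
back by `π` (so that `π` is a local isometry). -/
def CoverSetup {T Tt : Type*} [MetricSpace T] [MetricSpace Tt] (π : Tt → T) : Prop :=
  IsCoveringMap π ∧ Function.Surjective π ∧ IsLocalIsometry π ∧ SimplyConnectedSpace Tt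

/-- `τ` is the deck transformation of the cover `π` determined by
`τ (γ̃ 0) = γ̃ 1` for every lift `γ̃` of every degree-1 loop `γ`. -/
def IsDeck {T Tt : Type*} [MetricSpace T] [MetricSpace Tt] (π : Tt → T)
    (x₀ : T) (α₀ : Path x₀ x₀) (τ : Tt → Tt) : Prop :=
  Continuous τ ∧ (∀ x, π (τ x) = π x) ∧
    ∀ (x : T) (γ : Path x x), IsDegreeOneLoop x₀ α₀ γ →
      ∀ γt : C(unitInterval, Tt), (∀ t, π (γt t) = γ t) → τ (γt 0) = γt 1

/-- `μ̃` is the natural lift of `μ` to the cover: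
`μ̃ (A) = ∫ #(π⁻¹(x) ∩ A) dμ (x)`. -/
def IsLiftedMeasure {T Tt : Type*} [MetricSpace T] [MeasurableSpace T]
    [MetricSpace Tt] [MeasurableSpace Tt] (π : Tt → T) (μ : Measure T)
    (μt : Measure Tt) : Prop :=
  ∀ A : Set Tt, MeasurableSet A → μt A = ∫⁻ x, ((π ⁻¹' {x} ∩ A).encard : ℝ≥0∞) ∂μ

/-! ### Newtonian spaces -/

/-- The seminorm of `N^{1,p}(U)`. -/
def NSeminorm {X : Type*} [PseudoMetricSpace X] [MeasurableSpace X] (μ : Measure X)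
    (p : ℝ) (U : Set X) (f : X → ℝ) : ℝ≥0∞ :=
  (∫⁻ x in U, ENNReal.ofReal |f x| ^ p ∂μ) ^ (1 / p) +
    ⨅ (ρ : X → ℝ≥0∞) (_ : Measurable ρ ∧ IsWeakUpperGradientOn μ p U f ρ),
      (∫⁻ x in U, ρ x ^ p ∂μ) ^ (1 / p)

/-- `f ∈ N^{1,p}_loc`. -/
def MemNloc {X : Type*} [PseudoMetricSpace X] [MeasurableSpace X] (μ : Measure X)
    (p : ℝ) (f : X → ℝ) : Prop :=
  ∀ U : Set X, IsOpen U → IsCompact (closure U) →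
    (∫⁻ x in U, ENNReal.ofReal |f x| ^ p ∂μ) < ⊤ ∧
      ∃ ρ : X → ℝ≥0∞, Measurable ρ ∧ IsWeakUpperGradientOn μ p U f ρ ∧
        (∫⁻ x in U, ρ x ^ p ∂μ) < ⊤

/-- The collection `F`: nonnegative Borel functions `ρ` on `T` such that `ρ ∘ π` is a
`p`-weak upper gradient of some `f ∈ N^{1,p}_loc (T̃)` with `f ∘ τ - f = 1` a.e. -/
def MemF {T Tt : Type*} [MetricSpace T] [MeasurableSpace T] [MetricSpace Tt]
    [MeasurableSpace Tt] (π : Tt → T) (τ : Tt → Tt) (μt : Measure Tt) (p : ℝ)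
    (ρ : T → ℝ≥0∞) : Prop :=
  Measurable ρ ∧ ∃ f : Tt → ℝ, MemNloc μt p f ∧ (∀ᵐ x ∂μt, f (τ x) - f x = 1) ∧
    IsWeakUpperGradient μt p f (ρ ∘ π)

/-- The capacity `cap_p^F T`. -/
def capF {T Tt : Type*} [MetricSpace T] [MeasurableSpace T] [MetricSpace Tt]
    [MeasurableSpace Tt] (μ : Measure T) (π : Tt → T) (τ : Tt → Tt) (μt : Measure Tt)
    (p : ℝ) : ℝ≥0∞ :=
  ⨅ (ρ : T → ℝ≥0∞) (_ : MemF π τ μt p ρ), ∫⁻ x, ρ x ^ p ∂μ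

/-! ### Miscellaneous operators -/

/-- The restricted Hardy–Littlewood maximal operator `M_R`. -/
def restrMax {T : Type*} [MetricSpace T] [MeasurableSpace T] (μ : Measure T)
    (R : ℝ≥0∞) (g : T → ℝ≥0∞) (x : T) : ℝ≥0∞ :=
  ⨆ (s : ℝ) (_ : 0 < s ∧ ENNReal.ofReal s ≤ R),
    (∫⁻ y in ball x s, g y ∂μ) / μ (ball x s)

/-- The upper Lebesgue integral. -/
def upperLintegral {Y : Type*} [MeasurableSpace Y] (ν : Measure Y)
    (F : Y → ℝ≥0∞) : ℝ≥0∞ :=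
  ⨅ (G : Y → ℝ≥0∞) (_ : Measurable G ∧ ∀ y, F y ≤ G y), ∫⁻ y, G y ∂ν

/-! ### The sets `Ω` and the functions `ψ̃`, `ζ`, `ψ` of Section 4.3 -/

/-- The set of points reachable from `A` by a rectifiable path inside `W`. -/
def reach {T : Type*} [MetricSpace T] (A W : Set T) : Set T :=
  {x | ∃ γ : UPath T, γ.start ∈ A ∧ γ.finish = x ∧ γ.InSet W}

/-- `inf_γ ∫_γ ρ ds` over rectifiable paths connecting `A` to `x` inside `W`. -/
def pathDist {T : Type*} [MetricSpace T] (ρ : T → ℝ≥0∞) (A W : Set T) (x : T) : ℝ≥0∞ :=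
  ⨅ (γ : UPath T) (_ : γ.start ∈ A ∧ γ.finish = x ∧ γ.InSet W), γ.integral ρ

open scoped Classical in
/-- The function `ψ̃`. -/
def psiTilde {T : Type*} [MetricSpace T] (ρ : T → ℝ≥0∞) (A W : Set T) (x : T) : ℝ :=
  if x ∈ reach A W then (pathDist ρ A W x).toReal else 0

/-- The function `min {1, ψ̃}`. -/
def zeta {T : Type*} [MetricSpace T] (ρ : T → ℝ≥0∞) (A W : Set T) (x : T) : ℝ :=
  min 1 (psiTilde ρ A W x)

/-- The competing admissible map `ψ = [min {1, ψ̃}] : T → ℝ/ℤ`. -/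
def psiMap {T : Type*} [MetricSpace T] (ρ : T → ℝ≥0∞) (A W : Set T) (x : T) :
    UnitAddCircle :=
  ((zeta ρ A W x : ℝ) : UnitAddCircle)

end Duality

/-! Lift `φ ∘ π`, where `S = φ⁻¹(0)`, to a function `F` on the universal cover with
`F ∘ τ = F + 1`. Away from the preimage of `S` the integer part of `F` is locally constant, and
averaging it over balls of radius `r = 1 / n` gives a function `f` at bounded distance from `F`,
with `f ∘ τ = f + 1`, which varies only near `S`. The Poincaré inequality for the characteristic
function of one side of `S`, cut off along a cover of `S` by small balls that nearly realizes the
codimension 1 measure `H`, bounds the slope of `f` in a ball `B` of radius `r` by a multiple of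
`H(S ∩ 5ΛB) / μ(B)`. A sum of such multiples of characteristic functions of balls, taken over a net
of centres, therefore lies in the class `MemF`; its pairing with `ρ₀ ^ (p - 1)` is at most a multiple
of `∫_S M_{C/n} (ρ₀ ^ (p - 1)) dH` because the balls have bounded overlap, and by minimality of
`ρ₀` it is at least `cap_p T`. That `F` exists uses local path-connectedness of `T`, which follows
from the Poincaré inequality applied to lengths of discrete chains. -/

namespace Duality

/-! ### Measures that are doubling at all scales -/

/-- A measure that charges every ball and satisfies `μ (2B) ≤ D μ (B)` for all balls `B`.
In contrast to `IsDoubling` there is no bound on the radii. -/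
structure IsUniformlyDoubling {X : Type*} [PseudoMetricSpace X] [MeasurableSpace X]
    (μ : Measure X) (D : ℝ≥0) : Prop where
  ball_pos : ∀ (x : X) (r : ℝ), 0 < r → 0 < μ (ball x r)
  doubling : ∀ (x : X) (r : ℝ), 0 < r → μ (ball x (2 * r)) ≤ D * μ (ball x r)

/-- A uniformly doubling measure satisfying the weak `1`-Poincaré inequality
`∫_B |u - u_B| dμ ≤ K r ∫_{ΛB} ρ dμ` with a dilation factor `Λ ≥ 1`. In contrast to
`SupportsPoincare` the integrals are not averaged. -/
structure IsPIMeasure {X : Type*} [PseudoMetricSpace X] [MeasurableSpace X]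
    (μ : Measure X) (D K : ℝ≥0) (Λ : ℝ) : Prop extends IsUniformlyDoubling μ D where
  one_le_Λ : 1 ≤ Λ
  poincare : ∀ (u : X → ℝ) (ρ : X → ℝ≥0∞), LocallyIntegrable u μ → Measurable ρ →
    IsUpperGradient u ρ → ∀ (x : X) (r : ℝ), 0 < r →
      (∫⁻ y in ball x r, ENNReal.ofReal |u y - ⨍ z in ball x r, u z ∂μ| ∂μ) ≤
        K * ENNReal.ofReal r * ∫⁻ y in ball x (Λ * r), ρ y ∂μ

namespace IsUniformlyDoubling

variable {X : Type*} [PseudoMetricSpace X] [MeasurableSpace X] {μ : Measure X} {D : ℝ≥0}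

lemma measure_ball_two_pow_mul_le (h : IsUniformlyDoubling μ D) (k : ℕ) (x : X) {r : ℝ}
    (hr : 0 < r) : μ (ball x (2 ^ k * r)) ≤ D ^ k * μ (ball x r) := by
  induction k with
  | zero => simp
  | succ k ih =>
    calc μ (ball x (2 ^ (k + 1) * r)) = μ (ball x (2 * (2 ^ k * r))) := by ring_nf
      _ ≤ D * μ (ball x (2 ^ k * r)) := h.doubling x _ (by positivity)
      _ ≤ D * (D ^ k * μ (ball x r)) := by gcongr
      _ = D ^ (k + 1) * μ (ball x r) := by ring

lemma measure_ball_le_pow_mul (h : IsUniformlyDoubling μ D) (k : ℕ) {x y : X} {r R : ℝ}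
    (hr : 0 < r) (hR : R + dist x y ≤ 2 ^ k * r) : μ (ball x R) ≤ D ^ k * μ (ball y r) :=
  (measure_mono (ball_subset_ball' hR)).trans (h.measure_ball_two_pow_mul_le k y hr)

lemma one_le [IsFiniteMeasure μ] [Nonempty X] (h : IsUniformlyDoubling μ D) : 1 ≤ D := by
  obtain ⟨x⟩ := ‹Nonempty X›
  have hle : μ (ball x 1) ≤ D * μ (ball x 1) := by
    simpa using h.measure_ball_le_pow_mul 1 (x := x) (y := x) one_pos (by norm_num)
  rw [← ENNReal.coe_le_coe]
  refine (ENNReal.mul_le_mul_iff_left (h.ball_pos x 1 one_pos).ne' (measure_ne_top μ _)).1 ?_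
  simpa using hle

end IsUniformlyDoubling

lemma ofReal_mul_diam_ball_le {X : Type*} [PseudoMetricSpace X] (c : ℝ) (x : X) {r : ℝ}
    (hr : 0 ≤ r) :
    ENNReal.ofReal (c * Metric.diam (ball x r)) ≤ (2 * c).toNNReal * ENNReal.ofReal r := by
  rcases le_or_gt c 0 with hc | hc
  · simp [ENNReal.ofReal_of_nonpos (mul_nonpos_of_nonpos_of_nonneg hc Metric.diam_nonneg)]
  · rw [ENNReal.ofNNReal_toNNReal, ← ENNReal.ofReal_mul (by positivity)]
    refine ENNReal.ofReal_le_ofReal ?_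
    nlinarith [Metric.diam_ball (x := x) hr]

section Normalization

variable {T : Type*} [MetricSpace T] [MeasurableSpace T] {μ : Measure T} {Cμ : ℝ≥0∞}

lemma IsDoubling.measure_ball_two_mul_le [CompactSpace T] [Nontrivial T]
    (h : IsDoubling μ Cμ) (x : T) {r : ℝ} (hr : 0 < r) :
    μ (ball x (2 * r)) ≤ Cμ * μ (ball x r) := by
  set d := Metric.diam (univ : Set T)
  have hd : 0 < d := Metric.diam_pos nontrivial_univ isCompact_univ.isBounded
  rcases lt_or_ge r d with hlt | hge
  · exact (h x r hr hlt).2.1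
  · have huniv : ball x (2 * (3 / 4 * d)) = univ := by
      refine eq_univ_of_forall fun y => mem_ball.2 ?_
      have : dist y x ≤ d :=
        Metric.dist_le_diam_of_mem isCompact_univ.isBounded (mem_univ y) (mem_univ x)
      linarith
    calc μ (ball x (2 * r)) ≤ μ (ball x (2 * (3 / 4 * d))) := by
          rw [huniv]; exact measure_mono (subset_univ _)
      _ ≤ Cμ * μ (ball x (3 / 4 * d)) := (h x _ (by linarith) (by linarith)).2.1
      _ ≤ Cμ * μ (ball x r) := by gcongr; linarith

lemma IsDoubling.ne_top [CompactSpace T] [Nontrivial T] (h : IsDoubling μ Cμ)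
    (hpos : ∀ (x : T) (r : ℝ), 0 < r → 0 < μ (ball x r)) : Cμ ≠ ⊤ := by
  rintro rfl
  obtain ⟨x⟩ := (inferInstance : Nonempty T)
  have hd : 0 < Metric.diam (univ : Set T) :=
    Metric.diam_pos nontrivial_univ isCompact_univ.isBounded
  have hlt := (h x (Metric.diam (univ : Set T) / 2) (by linarith) (by linarith)).2.2
  rw [ENNReal.top_mul (hpos x _ (by linarith)).ne'] at hlt
  exact lt_irrefl _ hlt

lemma IsDoubling.isUniformlyDoubling [CompactSpace T] [Nontrivial T] (h : IsDoubling μ Cμ)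
    (hpos : ∀ (x : T) (r : ℝ), 0 < r → 0 < μ (ball x r)) :
    IsUniformlyDoubling μ Cμ.toNNReal where
  ball_pos := hpos
  doubling x r hr := by
    rw [ENNReal.coe_toNNReal (h.ne_top hpos)]
    exact h.measure_ball_two_mul_le x hr

lemma SupportsPoincare.isFiniteMeasure [CompactSpace T] {CP lP : ℝ}
    (h : SupportsPoincare μ CP lP) : IsFiniteMeasure μ := by
  refine ⟨?_⟩
  rcases isEmpty_or_nonempty T with hT | ⟨⟨x⟩⟩
  · simp [univ_eq_empty_iff.2 hT]
  · obtain ⟨R, hR, hball⟩ := (isCompact_univ (X := T)).isBounded.subset_ball_lt 0 x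
    exact (measure_mono hball).trans_lt (h.1 x R hR).2

lemma SupportsPoincare.isPIMeasure {D : ℝ≥0} {CP lP : ℝ} {k : ℕ}
    (h : SupportsPoincare μ CP lP) (hD : IsUniformlyDoubling μ D) (hk : 0 < lP → 1 ≤ 2 ^ k * lP) :
    IsPIMeasure μ D (D ^ k * (2 * CP).toNNReal) (max 1 lP) where
  toIsUniformlyDoubling := hD
  one_le_Λ := le_max_left _ _
  poincare u ρ hu hρ hug x r hr := by
    have havg := h.2 u ρ hu hρ hug x r hr
    rw [ENNReal.div_le_iff (h.1 x r hr).1.ne' (h.1 x r hr).2.ne] at havg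
    refine havg.trans ?_
    rcases le_or_gt lP 0 with hl | hl
    · simp [ball_eq_empty.2 (mul_nonpos_of_nonpos_of_nonneg hl hr.le)]
    have hlr : 0 < lP * r := by positivity
    have hball : μ (ball x r) ≤ D ^ k * μ (ball x (lP * r)) :=
      hD.measure_ball_le_pow_mul k hlr (by rw [dist_self]; nlinarith [hk hl])
    have hsub : ball x (lP * r) ⊆ ball x (max 1 lP * r) :=
      ball_subset_ball (by gcongr; exact le_max_right _ _)
    calc ENNReal.ofReal (CP * Metric.diam (ball x r)) *
          ((∫⁻ y in ball x (lP * r), ρ y ∂μ) / μ (ball x (lP * r))) * μ (ball x r)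
        ≤ ((2 * CP).toNNReal * ENNReal.ofReal r) *
          ((∫⁻ y in ball x (max 1 lP * r), ρ y ∂μ) / μ (ball x (lP * r))) *
          (D ^ k * μ (ball x (lP * r))) := by
          gcongr
          exact ofReal_mul_diam_ball_le CP x hr.le
      _ = ((D ^ k * (2 * CP).toNNReal : ℝ≥0) : ℝ≥0∞) * ENNReal.ofReal r *
          (((∫⁻ y in ball x (max 1 lP * r), ρ y ∂μ) / μ (ball x (lP * r))) *
            μ (ball x (lP * r))) := by push_cast; ring
      _ = _ := by rw [ENNReal.div_mul_cancel (h.1 x _ hlr).1.ne' (h.1 x _ hlr).2.ne]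

end Normalization

lemma exists_isPIMeasure_constants (Cμ : ℝ≥0∞) (CP lP : ℝ) :
    ∃ (D K : ℝ≥0) (Λ : ℝ), ∀ (T : Type*) [MetricSpace T] [MeasurableSpace T] [CompactSpace T]
      [Nontrivial T] (μ : Measure T), IsDoubling μ Cμ → SupportsPoincare μ CP lP →
        IsPIMeasure μ D K Λ := by
  obtain ⟨k, hk⟩ : ∃ k : ℕ, 0 < lP → 1 ≤ 2 ^ k * lP := by
    obtain ⟨k, hk⟩ := pow_unbounded_of_one_lt (1 / lP) one_lt_two
    exact ⟨k, fun hl => ((div_lt_iff₀ hl).1 hk).le⟩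
  exact ⟨_, _, _, fun T _ _ _ _ μ hD hP =>
    hP.isPIMeasure (hD.isUniformlyDoubling fun x r hr => (hP.1 x r hr).1) hk⟩

/-! ### Coarse paths and quasiconvexity -/

lemma UPath.dist_toFun_le {X : Type*} [PseudoMetricSpace X] (γ : UPath X) {s t : ℝ}
    (hs : s ∈ Icc γ.a γ.b) (ht : t ∈ Icc γ.a γ.b) : dist (γ.toFun s) (γ.toFun t) ≤ |s - t| := by
  simpa [Real.dist_eq] using γ.lip.dist_le_mul s hs t ht

lemma setLIntegral_Icc_add_Icc (q : ℝ → ℝ≥0∞) {a b c : ℝ} (hab : a ≤ b) (hbc : b ≤ c) :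
    (∫⁻ s in Icc a b, q s) + ∫⁻ s in Icc b c, q s = ∫⁻ s in Icc a c, q s := by
  rw [← Measure.restrict_congr_set (Ioc_ae_eq_Icc (a := b) (b := c)),
    ← lintegral_union measurableSet_Ioc, Icc_union_Ioc_eq_Icc hab hbc]
  exact Set.disjoint_left.2 fun x hx hx' => not_lt.2 hx.2 hx'.1

lemma edist_le_lintegral_of_local {Y : Type*} [PseudoEMetricSpace Y] {F : ℝ → Y}
    {q : ℝ → ℝ≥0∞} {a b : ℝ} (hab : a ≤ b)
    (h : ∀ t₀ ∈ Icc a b, ∃ ε > 0, ∀ t ∈ Icc a b, ∀ t' ∈ Icc a b, t ∈ ball t₀ ε →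
      t' ∈ ball t₀ ε → t ≤ t' → edist (F t) (F t') ≤ ∫⁻ s in Icc t t', q s) :
    edist (F a) (F b) ≤ ∫⁻ s in Icc a b, q s := by
  choose! ε hε₀ hε using h
  obtain ⟨t, ht₀, hmono, ⟨m, hm⟩, hcover⟩ := exists_monotone_Icc_subset_open_cover_Icc hab
    (c := fun t₀ : Icc a b => ball t₀ (ε t₀)) (fun _ => isOpen_ball)
    (fun t _ => mem_iUnion.2 ⟨t, mem_ball_self (hε₀ t t.2)⟩)
  have hind (n : ℕ) : edist (F a) (F (t n)) ≤ ∫⁻ s in Icc a (t n), q s := by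
    induction n with
    | zero => simp [ht₀]
    | succ n ih =>
      have hle : t n ≤ t (n + 1) := hmono n.le_succ
      obtain ⟨t₀, hsub⟩ := hcover n
      calc edist (F a) (F (t (n + 1)))
          ≤ edist (F a) (F (t n)) + edist (F (t n)) (F (t (n + 1))) := edist_triangle _ _ _
        _ ≤ (∫⁻ s in Icc a (t n), q s) + ∫⁻ s in Icc (t n : ℝ) (t (n + 1)), q s :=
          add_le_add ih (hε t₀ t₀.2 _ (t n).2 _ (t (n + 1)).2 (hsub ⟨le_rfl, hle⟩)
            (hsub ⟨hle, le_rfl⟩) hle)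
        _ = ∫⁻ s in Icc a (t (n + 1)), q s := setLIntegral_Icc_add_Icc q (t n).2.1 hle
  simpa [hm m le_rfl] using hind m

lemma isUpperGradient_of_local {X Y : Type*} [PseudoMetricSpace X] [PseudoEMetricSpace Y]
    {f : X → Y} {q : X → ℝ≥0∞}
    (h : ∀ x, ∃ U ∈ 𝓝 x, ∃ M : ℝ≥0∞, (∀ y ∈ U, M ≤ q y) ∧
      ∀ y ∈ U, ∀ y' ∈ U, edist (f y) (f y') ≤ M * edist y y') :
    IsUpperGradient f q := by
  refine fun γ => edist_le_lintegral_of_local (F := fun t => f (γ.toFun t)) γ.hab fun t₀ ht₀ => ?_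
  obtain ⟨U, hU, M, hMq, hM⟩ := h (γ.toFun t₀)
  obtain ⟨ε, hε, hεU⟩ := Metric.mem_nhdsWithin_iff.1 (γ.lip.continuousOn t₀ ht₀ hU)
  refine ⟨ε, hε, fun t ht t' ht' htb htb' htt' => ?_⟩
  calc edist (f (γ.toFun t)) (f (γ.toFun t'))
      ≤ M * edist (γ.toFun t) (γ.toFun t') := hM _ (hεU ⟨htb, ht⟩) _ (hεU ⟨htb', ht'⟩)
    _ ≤ M * ENNReal.ofReal (t' - t) := by
        gcongr
        rw [edist_dist]
        refine ENNReal.ofReal_le_ofReal ((γ.dist_toFun_le ht ht').trans_eq ?_)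
        rw [abs_sub_comm, abs_of_nonneg (sub_nonneg.2 htt')]
    _ = ∫⁻ _ in Icc t t', M := by rw [setLIntegral_const, Real.volume_Icc]
    _ ≤ ∫⁻ s in Icc t t', q (γ.toFun s) :=
        setLIntegral_mono' measurableSet_Icc fun s hs => hMq _ <|
          hεU ⟨(convex_ball t₀ ε).ordConnected.out htb htb' hs, ht.1.trans hs.1, hs.2.trans ht'.2⟩

section CoarsePath

variable {X : Type*} [MetricSpace X] {ε : ℝ} {x y z : X} {ℓ : ℝ}

/-- `x` and `y` are joined by a map, constant outside `[0, ℓ]`, which is `1`-Lipschitz up to an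
additive error `ε`. It need not be continuous: these are the `ε`-chains of length at most `ℓ`. -/
def CoarsePath (ε : ℝ) (x y : X) (ℓ : ℝ) : Prop :=
  0 ≤ ℓ ∧ ∃ f : ℝ → X, (∀ t ≤ 0, f t = x) ∧ (∀ t ≥ ℓ, f t = y) ∧
    ∀ s t, dist (f s) (f t) ≤ |s - t| + ε

/-- The infimal length of the coarse paths from `x` to `y` with error `ε`; it is the junk value
`0` if there are none. -/
def coarseDist (ε : ℝ) (x y : X) : ℝ := sInf {ℓ | CoarsePath ε x y ℓ}

lemma CoarsePath.refl (hε : 0 ≤ ε) (x : X) : CoarsePath ε x x 0 :=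
  ⟨le_rfl, fun _ => x, fun _ _ => rfl, fun _ _ => rfl, fun s t => by rw [dist_self]; positivity⟩

lemma CoarsePath.mono {ℓ' : ℝ} (h : CoarsePath ε x y ℓ) (hℓ : ℓ ≤ ℓ') : CoarsePath ε x y ℓ' := by
  obtain ⟨h₀, f, hx, hy, hf⟩ := h
  exact ⟨h₀.trans hℓ, f, hx, fun t ht => hy t (hℓ.trans ht), hf⟩

lemma CoarsePath.extend (h : CoarsePath ε x y ℓ) (hyz : dist y z ≤ ε) :
    CoarsePath ε x z (ℓ + dist y z) := by
  obtain ⟨h₀, f, hx, hy, hf⟩ := h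
  have hd : 0 ≤ dist y z := dist_nonneg
  have hcross (s t) (hs : s < ℓ + dist y z) (ht : ℓ + dist y z ≤ t) :
      dist (f s) z ≤ |s - t| + ε := by
    rw [abs_sub_comm, abs_of_nonneg (by linarith)]
    rcases le_total ℓ s with hℓs | hsℓ
    · rw [hy s hℓs]; linarith
    · have hsy := hf s ℓ
      rw [hy ℓ le_rfl, abs_sub_comm, abs_of_nonneg (by linarith)] at hsy
      linarith [dist_triangle (f s) y z]
  refine ⟨add_nonneg h₀ hd, fun t => if t < ℓ + dist y z then f t else z, fun t ht => ?_,
    fun t ht => if_neg (not_lt.2 ht), fun s t => ?_⟩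
  · dsimp only
    split_ifs with hlt
    · exact hx t ht
    · have hyz₀ : dist y z = 0 := by linarith
      rw [← dist_eq_zero.1 hyz₀, ← hy t (by linarith), hx t ht]
  · dsimp only
    split_ifs with hs ht ht
    · exact hf s t
    · exact hcross s t hs (not_lt.1 ht)
    · rw [dist_comm, abs_sub_comm]; exact hcross t s ht (not_lt.1 hs)
    · rw [dist_self]
      exact add_nonneg (abs_nonneg _) (hd.trans hyz)

lemma CoarsePath.of_coarseDist_lt {L : ℝ} (hne : ∃ ℓ, CoarsePath ε x y ℓ)
    (h : coarseDist ε x y < L) : CoarsePath ε x y L := by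
  obtain ⟨ℓ, hℓ, hlt⟩ := exists_lt_of_csInf_lt hne h
  exact CoarsePath.mono hℓ hlt.le

lemma coarseDist_le (h : CoarsePath ε x y ℓ) : coarseDist ε x y ≤ ℓ :=
  csInf_le ⟨0, fun _ h' => h'.1⟩ h

lemma coarseDist_self (hε : 0 ≤ ε) (x : X) : coarseDist ε x x = 0 :=
  le_antisymm (coarseDist_le (.refl hε x)) (Real.sInf_nonneg fun _ h => h.1)

lemma coarseDist_le_add (hne : ∃ ℓ, CoarsePath ε x y ℓ) (hyz : dist y z ≤ ε) :
    coarseDist ε x z ≤ coarseDist ε x y + dist y z := by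
  rw [← sub_le_iff_le_add]
  exact le_csInf hne fun ℓ hℓ => sub_le_iff_le_add.2 (coarseDist_le (CoarsePath.extend hℓ hyz))

lemma exists_coarsePath [PreconnectedSpace X] (hε : 0 < ε) (x y : X) :
    ∃ ℓ, CoarsePath ε x y ℓ := by
  set A : Set X := {y | ∃ ℓ, CoarsePath ε x y ℓ}
  have hstep : ∀ y ∈ A, ∀ z, dist y z ≤ ε → z ∈ A := fun y ⟨_, h⟩ z hz => ⟨_, h.extend hz⟩
  have hopen : IsOpen A := Metric.isOpen_iff.2 fun y hy =>
    ⟨ε, hε, fun z hz => hstep y hy z (mem_ball'.1 hz).le⟩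
  have hclosed : IsClosed A := isOpen_compl_iff.1 <| Metric.isOpen_iff.2 fun y hy =>
    ⟨ε, hε, fun z hz hzA => hy (hstep z hzA y (mem_ball.1 hz).le)⟩
  have huniv : A = univ := IsClopen.eq_univ ⟨hclosed, hopen⟩ ⟨x, 0, .refl hε.le x⟩
  exact (huniv ▸ mem_univ y : y ∈ A)

lemma abs_coarseDist_sub_le [PreconnectedSpace X] (hε : 0 < ε) (x : X) (hyz : dist y z ≤ ε) :
    |coarseDist ε x y - coarseDist ε x z| ≤ dist y z := by
  have hz := coarseDist_le_add (exists_coarsePath hε x y) hyz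
  have hy := coarseDist_le_add (exists_coarsePath hε x z) (dist_comm y z ▸ hyz)
  rw [dist_comm z y] at hy
  exact abs_sub_le_iff.2 ⟨by linarith, by linarith⟩

lemma isUpperGradient_coarseDist [PreconnectedSpace X] (hε : 0 < ε) (x : X) :
    IsUpperGradient (coarseDist ε x) fun _ => 1 := by
  refine isUpperGradient_of_local fun z =>
    ⟨ball z (ε / 2), ball_mem_nhds z (by positivity), 1, fun _ _ => le_rfl, fun y hy y' hy' => ?_⟩
  rw [one_mul, edist_dist, edist_dist, Real.dist_eq]
  refine ENNReal.ofReal_le_ofReal (abs_coarseDist_sub_le hε x ?_)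
  rw [mem_ball] at hy hy'
  linarith [dist_triangle_right y y' z]

lemma continuous_coarseDist [PreconnectedSpace X] (hε : 0 < ε) (x : X) :
    Continuous (coarseDist ε x) :=
  Metric.continuous_iff.2 fun _ δ hδ => ⟨min ε δ, lt_min hε hδ, fun _ hz =>
    (abs_coarseDist_sub_le hε x (hz.le.trans (min_le_left _ _))).trans_lt
      (hz.trans_le (min_le_right _ _))⟩

lemma exists_lipschitzWith_one_of_coarsePath [CompactSpace X]
    (h : ∀ ε > 0, CoarsePath ε x y ℓ) : ∃ f : ℝ → X, LipschitzWith 1 f ∧ f 0 = x ∧ f ℓ = y := by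
  choose f hfx hfy hf using fun n : ℕ => (h (1 / ((n : ℝ) + 1)) (by positivity)).2
  let U : Ultrafilter ℕ := hyperfilter ℕ
  have hU : (U : Filter ℕ) ≤ atTop := Nat.cofinite_eq_atTop ▸ hyperfilter_le_cofinite
  have : Nonempty X := ⟨x⟩
  let g : ℝ → X := fun t => (U.map fun n => f n t).lim
  have hg (t) : Tendsto (fun n => f n t) U (𝓝 (g t)) := (U.map fun n => f n t).le_nhds_lim
  refine ⟨g, LipschitzWith.of_dist_le_mul fun s t => ?_, ?_, ?_⟩
  · have hlim : Tendsto (fun n : ℕ => |s - t| + 1 / ((n : ℝ) + 1)) U (𝓝 (|s - t| + 0)) :=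
      (tendsto_const_nhds.add tendsto_one_div_add_atTop_nhds_zero_nat).mono_left hU
    simpa [Real.dist_eq] using
      le_of_tendsto_of_tendsto' ((hg s).dist (hg t)) hlim fun n => hf n s t
  · exact tendsto_nhds_unique (hg 0) (by simp [hfx])
  · exact tendsto_nhds_unique (hg ℓ) (by simp [hfy])

end CoarsePath

lemma ofReal_abs_setAverage_sub_le {α : Type*} [MeasurableSpace α] {μ : Measure α} {s : Set α}
    (h₀ : μ s ≠ 0) (ht : μ s ≠ ⊤) {u : α → ℝ} (hu : IntegrableOn u s μ) (c : ℝ) :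
    ENNReal.ofReal |(⨍ y in s, u y ∂μ) - c| ≤
      (∫⁻ y in s, ENNReal.ofReal |u y - c| ∂μ) / μ s := by
  have hm : (0 : ℝ) < μ.real s := ENNReal.toReal_pos h₀ ht
  have hc : IntegrableOn (fun _ : α => c) s μ := integrableOn_const ht
  have havg : (⨍ y in s, u y ∂μ) - c = (μ.real s)⁻¹ * ∫ y in s, (u y - c) ∂μ := by
    rw [integral_sub hu hc, setAverage_eq, smul_eq_mul, setIntegral_const, smul_eq_mul]
    field_simp
  rw [havg, abs_mul, abs_of_pos (inv_pos.2 hm), ENNReal.ofReal_mul (inv_pos.2 hm).le,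
    ENNReal.ofReal_inv_of_pos hm, mul_comm, ← div_eq_mul_inv, Measure.real,
    ENNReal.ofReal_toReal ht]
  have habs : IntegrableOn (fun y => |u y - c|) s μ := (hu.sub hc).abs
  rw [← ofReal_integral_eq_lintegral_ofReal habs (ae_of_all _ fun _ => abs_nonneg _)]
  gcongr
  exact abs_integral_le_integral_abs

lemma abs_sub_le_of_dyadic {a : ℝ → ℝ} {M r : ℝ} (hr : 0 < r)
    (ha : ∀ s > 0, |a s - a (2 * s)| ≤ M * s) (k : ℕ) :
    |a (r / 2 ^ k) - a r| ≤ M * (r - r / 2 ^ k) := by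
  induction k with
  | zero => simp
  | succ k ih =>
    have hhalf : 2 * (r / 2 ^ (k + 1)) = r / 2 ^ k := by rw [pow_succ]; field_simp
    have hstep := ha (r / 2 ^ (k + 1)) (by positivity)
    rw [hhalf] at hstep
    have hsum : M * (r / 2 ^ (k + 1)) + M * (r - r / 2 ^ k) = M * (r - r / 2 ^ (k + 1)) := by
      rw [← hhalf]; ring
    linarith [abs_sub_le (a (r / 2 ^ (k + 1))) (a (r / 2 ^ k)) (a r)]

namespace IsPIMeasure

section Telescoping

variable {X : Type*} [PseudoMetricSpace X] [MeasurableSpace X] {μ : Measure X}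
  [IsFiniteMeasure μ] {D K : ℝ≥0} {Λ : ℝ}

lemma exists_abs_setAverage_sub_setAverage_le (h : IsPIMeasure μ D K Λ) :
    ∃ M : ℝ, 0 ≤ M ∧ ∀ u : X → ℝ, Integrable u μ → IsUpperGradient u (fun _ => 1) →
      ∀ (x y : X) (s : ℝ), 0 < s → dist y x ≤ s →
        |(⨍ z in ball y s, u z ∂μ) - ⨍ z in ball x (2 * s), u z ∂μ| ≤ M * s := by
  obtain ⟨m, hm⟩ := pow_unbounded_of_one_lt (2 * Λ + 1) one_lt_two
  refine ⟨(K * 2 * D ^ m : ℝ≥0), by positivity, fun u hu hug x y s hs hyx => ?_⟩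
  have hball : μ (ball x (Λ * (2 * s))) ≤ D ^ m * μ (ball y s) := by
    refine h.measure_ball_le_pow_mul m hs ?_
    rw [dist_comm]
    nlinarith
  rw [← ENNReal.ofReal_le_ofReal_iff (by positivity)]
  refine (ofReal_abs_setAverage_sub_le (h.ball_pos y s hs).ne' (measure_ne_top μ _)
    hu.integrableOn _).trans (ENNReal.div_le_of_le_mul ?_)
  calc ∫⁻ z in ball y s, ENNReal.ofReal |u z - ⨍ z in ball x (2 * s), u z ∂μ| ∂μ
      ≤ ∫⁻ z in ball x (2 * s), ENNReal.ofReal |u z - ⨍ z in ball x (2 * s), u z ∂μ| ∂μ :=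
        lintegral_mono_set (ball_subset_ball' (by linarith))
    _ ≤ K * ENNReal.ofReal (2 * s) * ∫⁻ _ in ball x (Λ * (2 * s)), 1 ∂μ :=
        h.poincare u _ hu.locallyIntegrable measurable_const hug x _ (by positivity)
    _ ≤ K * ENNReal.ofReal (2 * s) * (D ^ m * μ (ball y s)) := by
        rw [setLIntegral_one]; gcongr
    _ = ENNReal.ofReal ((K * 2 * D ^ m : ℝ≥0) * s) * μ (ball y s) := by
        rw [ENNReal.ofReal_mul zero_le_two, ENNReal.ofReal_mul NNReal.zero_le_coe,
          ENNReal.ofReal_coe_nnreal, ENNReal.ofReal_ofNat]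
        push_cast
        ring

lemma exists_abs_sub_le_mul_dist [OpensMeasurableSpace X] (h : IsPIMeasure μ D K Λ) :
    ∃ M : ℝ, 0 ≤ M ∧ ∀ u : X → ℝ, Integrable u μ → IsUpperGradient u (fun _ => 1) →
      ∀ ε > 0, (∀ x y, dist x y ≤ ε → |u x - u y| ≤ dist x y) →
        ∀ x y, 0 < dist x y → |u x - u y| ≤ M * dist x y := by
  obtain ⟨M, hM₀, hM⟩ := h.exists_abs_setAverage_sub_setAverage_le
  refine ⟨4 * M + 3, by positivity, fun u hu hug ε hε hloc x y hd => ?_⟩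
  have hsmall (z : X) {s : ℝ} (hs : 0 < s) (hsε : s ≤ ε) :
      |(⨍ w in ball z s, u w ∂μ) - u z| ≤ s := by
    refine (convex_closedBall (u z) s).set_average_mem isClosed_closedBall
      (h.ball_pos z s hs).ne' (measure_ne_top μ _)
      (ae_restrict_of_forall_mem measurableSet_ball fun w hw => ?_) hu.integrableOn
    have hwz : dist w z < s := hw
    exact (hloc w z (hwz.le.trans hsε)).trans hwz.le
  have hpoint (z : X) {r : ℝ} (hr : 0 < r) : |u z - ⨍ w in ball z r, u w ∂μ| ≤ (M + 1) * r := by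
    obtain ⟨k, hk⟩ := pow_unbounded_of_one_lt (r / ε) one_lt_two
    have hkε : r / 2 ^ k ≤ ε := by
      rw [div_lt_iff₀ hε] at hk
      exact (div_le_iff₀ (by positivity)).2 (by linarith)
    have hnear := hsmall z (by positivity) hkε
    rw [abs_sub_comm] at hnear
    have htel := abs_sub_le_of_dyadic (a := fun s => ⨍ w in ball z s, u w ∂μ) hr
      (fun s hs => hM u hu hug z z s hs (by rw [dist_self]; exact hs.le)) k
    have hrk : r / 2 ^ k ≤ r := div_le_self hr.le (one_le_pow₀ one_le_two)
    have hrk₀ : 0 ≤ r / 2 ^ k := by positivity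
    nlinarith [abs_sub_le (u z) (⨍ w in ball z (r / 2 ^ k), u w ∂μ) (⨍ w in ball z r, u w ∂μ)]
  have hx := hpoint x (by positivity : 0 < 2 * dist x y)
  have hy := hpoint y hd
  have hxy := hM u hu hug x y (dist x y) hd (dist_comm x y).ge
  rw [abs_sub_comm] at hy hxy
  linarith [abs_sub_le (u x) (⨍ w in ball x (2 * dist x y), u w ∂μ) (u y),
    abs_sub_le (⨍ w in ball x (2 * dist x y), u w ∂μ) (⨍ w in ball y (dist x y), u w ∂μ) (u y)]

end Telescoping

variable {X : Type*} [MetricSpace X] [MeasurableSpace X] [BorelSpace X] [CompactSpace X]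
  [PreconnectedSpace X] {μ : Measure X} [IsFiniteMeasure μ] {D K : ℝ≥0} {Λ : ℝ}

/-- The coarse distance from `x` is `1`-Lipschitz at scale `ε` and has upper gradient `1`, so the
Poincaré inequality makes it Lipschitz with a constant that does not depend on `ε`. -/
theorem exists_quasiconvex (h : IsPIMeasure μ D K Λ) :
    ∃ M : ℝ, 0 < M ∧ ∀ x y : X, ∃ f : ℝ → X, LipschitzWith 1 f ∧ f 0 = x ∧
      f (M * dist x y) = y := by
  obtain ⟨M, hM₀, hM⟩ := h.exists_abs_sub_le_mul_dist
  refine ⟨M + 1, by positivity, fun x y => ?_⟩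
  rcases eq_or_ne x y with rfl | hne
  · exact ⟨fun _ => x, LipschitzWith.const' _, rfl, rfl⟩
  have hd : 0 < dist y x := dist_pos.2 hne.symm
  refine exists_lipschitzWith_one_of_coarsePath fun ε hε =>
    .of_coarseDist_lt (exists_coarsePath hε x y) ?_
  have hlip := hM _ ((continuous_coarseDist hε x).integrable_of_hasCompactSupport
    (.of_compactSpace _)) (isUpperGradient_coarseDist hε x) ε hε
    (fun y z hyz => abs_coarseDist_sub_le hε x hyz) y x hd
  rw [coarseDist_self hε.le, sub_zero] at hlip
  rw [dist_comm]
  linarith [le_abs_self (coarseDist ε x y)]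

theorem locallyPathConnectedSpace (h : IsPIMeasure μ D K Λ) : LocallyPathConnectedSpace X := by
  obtain ⟨M, hM₀, hM⟩ := h.exists_quasiconvex
  refine locallyPathConnectedSpace_iff_pathComponentIn_mem_nhds.2 fun x u hu hxu => ?_
  obtain ⟨ε, hε, hsub⟩ := Metric.isOpen_iff.1 hu x hxu
  refine Filter.mem_of_superset (ball_mem_nhds x (by positivity : 0 < ε / M)) fun y hy => ?_
  obtain ⟨f, hf, hf₀, hf₁⟩ := hM x y
  have hd : M * dist x y < ε := by
    rw [mem_ball', lt_div_iff₀ hM₀] at hy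
    linarith
  refine JoinedIn.ofLine (f := fun t => f (t * (M * dist x y)))
    (hf.continuous.comp (by fun_prop)).continuousOn (by simpa using hf₀) (by simpa using hf₁) ?_
  rintro _ ⟨t, ht, rfl⟩
  have ht₀ : 0 ≤ t * (M * dist x y) := mul_nonneg ht.1 (by positivity)
  have hdist : dist (f (t * (M * dist x y))) x ≤ t * (M * dist x y) := by
    have hlip := hf.dist_le_mul (t * (M * dist x y)) 0
    rwa [hf₀, NNReal.coe_one, one_mul, Real.dist_eq, sub_zero, abs_of_nonneg ht₀] at hlip
  exact hsub (mem_ball.2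
    (hdist.trans_lt ((mul_le_of_le_one_left (by positivity) ht.2).trans_lt hd)))

end IsPIMeasure

/-! ### Lifts of degree `k` maps -/

lemma locallyPathConnectedSpace_of_isLocalHomeomorph {X Y : Type*} [TopologicalSpace X]
    [TopologicalSpace Y] [LocallyPathConnectedSpace Y] {f : X → Y} (hf : IsLocalHomeomorph f) :
    LocallyPathConnectedSpace X := by
  let _ : ChartedSpace Y X :=
    { atlas := range fun x => (hf x).choose
      chartAt := fun x => (hf x).choose
      mem_chart_source := fun x => (hf x).choose_spec.1
      chart_mem_atlas := fun x => mem_range_self x }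
  exact ChartedSpace.locallyPathConnectedSpace Y X

lemma exists_continuous_lift {X E : Type*} [TopologicalSpace X] [LocallyPathConnectedSpace X]
    [TopologicalSpace E] [SimplyConnectedSpace E] {π : E → X} (hπ : IsLocalHomeomorph π)
    {φ : X → UnitAddCircle} (hφ : Continuous φ) :
    ∃ F : E → ℝ, Continuous F ∧ ∀ x, (F x : UnitAddCircle) = φ (π x) := by
  have := locallyPathConnectedSpace_of_isLocalHomeomorph hπ
  obtain ⟨a⟩ := (inferInstance : Nonempty E)
  obtain ⟨e, he⟩ := QuotientAddGroup.mk_surjective (φ (π a))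
  obtain ⟨F, ⟨-, hF⟩, -⟩ := (AddCircle.isCoveringMap_coe (1 : ℝ)).existsUnique_continuousMap_lifts
    ⟨fun x => φ (π x), hφ.comp hπ.continuous⟩ a e he
  exact ⟨F, F.continuous, congrFun hF⟩

lemma lift_apply_one_eq_add_of_homotopic_stdLoop {y : UnitAddCircle} {γ : Path y y} {k : ℤ}
    (hγ : γ.Homotopic (stdLoop k y)) (f : C(I, ℝ)) (hf : ∀ t, (f t : UnitAddCircle) = γ t) :
    f 1 = f 0 + k := by
  have hcov : IsCoveringMap ((↑) : ℝ → UnitAddCircle) := AddCircle.isCoveringMap_coe 1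
  have hy : (f 0 : UnitAddCircle) = y := by rw [hf, γ.source]
  have hγ₀ : (γ : C(I, UnitAddCircle)) 0 = (f 0 : UnitAddCircle) := (hf 0).symm
  have hstd₀ : (stdLoop k y : C(I, UnitAddCircle)) 0 = (f 0 : UnitAddCircle) := by simp [hy]
  have hlift : f = hcov.liftPath γ (f 0) hγ₀ := by
    rw [hcov.eq_liftPath_iff']
    exact ⟨funext hf, rfl⟩
  have hstd : (⟨fun t => f 0 + k * t, by fun_prop⟩ : C(I, ℝ)) = hcov.liftPath _ (f 0) hstd₀ := by
    rw [hcov.eq_liftPath_iff']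
    refine ⟨funext fun t => ?_, by simp⟩
    simp [hy, stdLoop]
  have hend := hcov.liftPath_apply_one_eq_of_homotopicRel hγ (f 0) hγ₀ hstd₀
  have hend' := (congrArg (· 1) hlift).trans (hend.trans (congrArg (· 1) hstd).symm)
  simpa using hend'

section HasDegree

variable {T : Type*} {x₀ : T} {φ : T → UnitAddCircle} {k : ℤ}

lemma HasDegree.nontrivial [TopologicalSpace T] {α₀ : Path x₀ x₀} (hφ : HasDegree x₀ α₀ φ k)
    (hk : k ≠ 0) : Nontrivial T := by
  by_contra hT
  rw [not_nontrivial_iff_subsingleton] at hT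
  obtain ⟨hφc, hdeg⟩ := hφ
  obtain ⟨e, he⟩ := QuotientAddGroup.mk_surjective (φ x₀)
  have hloop : IsDegreeOneLoop x₀ α₀ ((Path.refl x₀).trans (α₀.trans (Path.refl x₀).symm)) :=
    ⟨_, .refl _⟩
  have hend := lift_apply_one_eq_add_of_homotopic_stdLoop (hdeg _ _ hloop) (.const I e)
    fun t => he.trans (congrArg φ (Subsingleton.elim _ _))
  simp [hk] at hend

lemma lift_deck_eq_add {Tt : Type*} [MetricSpace T] [PathConnectedSpace T] [MetricSpace Tt]
    {α₀ : Path x₀ x₀} {π : Tt → T} {τ : Tt → Tt} (hπ : IsCoveringMap π) (hτ : IsDeck π x₀ α₀ τ)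
    (hφ : HasDegree x₀ α₀ φ k) {F : Tt → ℝ} (hF : Continuous F)
    (hFφ : ∀ x, (F x : UnitAddCircle) = φ (π x)) (x : Tt) : F (τ x) = F x + k := by
  obtain ⟨hφc, hdeg⟩ := hφ
  let η : Path (π x) x₀ := PathConnectedSpace.somePath _ _
  let γ : Path (π x) (π x) := η.trans (α₀.trans η.symm)
  have hγ : IsDegreeOneLoop x₀ α₀ γ := ⟨η, .refl _⟩
  let γt : C(I, Tt) := hπ.liftPath γ x (by simp)
  have hγt (t) : π (γt t) = γ t := congrFun (hπ.liftPath_lifts γ x (by simp)) t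
  have hγt₀ : γt 0 = x := hπ.liftPath_zero γ x (by simp)
  have hend := lift_apply_one_eq_add_of_homotopic_stdLoop (hdeg _ γ hγ)
    ((⟨F, hF⟩ : C(Tt, ℝ)).comp γt) fun t => by simp [hFφ, hγt]
  have hτ₁ := hτ.2.2 _ γ hγ γt hγt
  rw [hγt₀] at hτ₁
  simpa [hτ₁, hγt₀] using hend

end HasDegree

/-! ### Codimension 1 contents and cutoff functions -/

lemma edist_toReal_le {a b L : ℝ≥0∞} (ha : a ≠ ⊤) (hb : b ≠ ⊤) (hab : a ≤ b + L)
    (hba : b ≤ a + L) : edist a.toReal b.toReal ≤ L := by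
  rcases eq_or_ne L ⊤ with rfl | hL
  · exact le_top
  rw [edist_dist, Real.dist_eq, ← ENNReal.ofReal_toReal hL]
  refine ENNReal.ofReal_le_ofReal (abs_sub_le_iff.2 ⟨?_, ?_⟩)
  · have := ENNReal.toReal_mono (by finiteness) hab
    rw [ENNReal.toReal_add hb hL] at this
    linarith
  · have := ENNReal.toReal_mono (by finiteness) hba
    rw [ENNReal.toReal_add ha hL] at this
    linarith

namespace UPath

variable {X : Type*} [PseudoMetricSpace X] (γ : UPath X) {s t : ℝ}

lemma mul_ofReal_min_le_integral (hs : s ∈ Icc γ.a γ.b) (ht : t ∈ Icc γ.a γ.b) {r : ℝ}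
    (hr : 0 ≤ r) {k : ℝ≥0∞} {ρ : X → ℝ≥0∞} (hρ : ∀ y, dist (γ.toFun s) y ≤ r → k ≤ ρ y) :
    k * ENNReal.ofReal (min |s - t| r) ≤ γ.integral ρ := by
  obtain ⟨u, hu, hsu⟩ : ∃ u ∈ uIcc s t, |s - u| = min |s - t| r := by
    rcases le_total s t with hst | hst
    · refine ⟨min t (s + r), ?_, ?_⟩
      · simp [hst, hr]
      · rw [abs_sub_comm, abs_sub_comm s, abs_of_nonneg (by simp [hst, hr]),
          abs_of_nonneg (sub_nonneg.2 hst), ← min_sub_sub_right, add_sub_cancel_left]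
    · refine ⟨max t (s - r), ?_, ?_⟩
      · simp [hst, hr, uIcc_of_ge]
      · rw [abs_of_nonneg (by simp [hst, hr]), abs_of_nonneg (sub_nonneg.2 hst),
          ← min_sub_sub_left, sub_sub_cancel]
  have huI : uIcc s u ⊆ Icc γ.a γ.b :=
    uIcc_subset_Icc hs (uIcc_subset_Icc hs ht hu)
  have hnear : ∀ v ∈ uIcc s u, k ≤ ρ (γ.toFun v) := fun v hv => by
    refine hρ _ ((γ.dist_toFun_le hs (huI hv)).trans ?_)
    calc |s - v| ≤ |s - u| := by
          rw [abs_sub_comm s v, abs_sub_comm s u]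
          exact abs_sub_left_of_mem_uIcc hv
      _ ≤ r := hsu.le.trans (min_le_right _ _)
  calc k * ENNReal.ofReal (min |s - t| r) = ∫⁻ _ in uIcc s u, k := by
        rw [setLIntegral_const, Real.volume_interval, abs_sub_comm u, hsu]
    _ ≤ ∫⁻ v in uIcc s u, ρ (γ.toFun v) := setLIntegral_mono' measurableSet_uIcc hnear
    _ ≤ γ.integral ρ := lintegral_mono_set huI

lemma integral_eq_top_of_not_inSet (hab : γ.a < γ.b) {z : X} {R : ℝ} (hR : 0 < R)
    (hγ : ¬ γ.InSet (ball z (2 * R))) {ρ : X → ℝ≥0∞} (hρ : ∀ y ∉ ball z R, ρ y = ⊤) :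
    γ.integral ρ = ⊤ := by
  simp only [InSet, not_forall] at hγ
  obtain ⟨s, hs, hout⟩ := hγ
  obtain ⟨t, ht, hst⟩ : ∃ t ∈ Icc γ.a γ.b, s ≠ t :=
    ((Icc_infinite hab).nontrivial.exists_ne s).imp fun _ h => ⟨h.1, h.2.symm⟩
  have hle := γ.mul_ofReal_min_le_integral hs ht hR.le (k := ⊤) (ρ := ρ) fun y hy =>
    (hρ y fun hyz => hout ?_).ge
  · rwa [ENNReal.top_mul, top_le_iff] at hle
    simpa [sub_eq_zero] using ⟨hst, hR⟩
  · rw [mem_ball] at hyz ⊢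
    linarith [dist_triangle (γ.toFun s) y z]

end UPath

section Bump

variable {X : Type*} [PseudoMetricSpace X] (c : X) (r : ℝ)

lemma thickenedIndicatorAux_le_add_edist (E : Set X) (x y : X) :
    thickenedIndicatorAux r E x ≤ thickenedIndicatorAux r E y + edist x y / ENNReal.ofReal r := by
  rw [thickenedIndicatorAux, tsub_le_iff_right, add_assoc, ← ENNReal.add_div]
  calc (1 : ℝ≥0∞) ≤ thickenedIndicatorAux r E y + infEDist y E / ENNReal.ofReal r := le_tsub_add
    _ ≤ _ := by
      gcongr
      rw [add_comm, edist_comm]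
      exact infEDist_le_infEDist_add_edist

lemma thickenedIndicatorAux_ball_eq_zero {y : X} (hy : y ∉ ball c (2 * r)) :
    thickenedIndicatorAux r (ball c r) y = 0 := by
  rcases le_or_gt r 0 with hr | hr
  · simp [thickenedIndicatorAux, ball_eq_empty.2 hr, ENNReal.ofReal_of_nonpos hr,
      ENNReal.top_div_of_ne_top]
  · refine thickenedIndicatorAux_zero hr _ fun hmem => hy ?_
    obtain ⟨z, hz, hyz⟩ := mem_thickening_iff.1 hmem
    rw [mem_ball] at hz ⊢
    linarith [dist_triangle y z c]

lemma thickenedIndicatorAux_ball_le_add_integral (γ : UPath X) {s t : ℝ}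
    (hs : s ∈ Icc γ.a γ.b) (ht : t ∈ Icc γ.a γ.b) :
    thickenedIndicatorAux r (ball c r) (γ.toFun s) ≤
      thickenedIndicatorAux r (ball c r) (γ.toFun t) +
        γ.integral ((ball c (2 ^ 2 * r)).indicator fun _ => (ENNReal.ofReal r)⁻¹) := by
  by_cases hsc : γ.toFun s ∈ ball c (2 * r)
  swap
  · simp [thickenedIndicatorAux_ball_eq_zero c r hsc]
  have hr : 0 < r := by linarith [pos_of_mem_ball hsc]
  have hint := γ.mul_ofReal_min_le_integral hs ht hr.le (k := (ENNReal.ofReal r)⁻¹)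
    (ρ := (ball c (2 ^ 2 * r)).indicator fun _ => (ENNReal.ofReal r)⁻¹) fun y hy => by
      have hyc : y ∈ ball c (2 ^ 2 * r) := by
        rw [mem_ball] at hsc ⊢
        linarith [dist_triangle_left y c (γ.toFun s)]
      rw [indicator_of_mem hyc]
  rw [mul_comm, ← div_eq_mul_inv] at hint
  rcases le_total |s - t| r with hst | hst
  · rw [min_eq_left hst] at hint
    refine (thickenedIndicatorAux_le_add_edist r _ _ (γ.toFun t)).trans ?_
    gcongr
    refine le_trans ?_ hint
    rw [edist_dist]
    gcongr
    exact γ.dist_toFun_le hs ht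
  · rw [min_eq_right hst, ENNReal.div_self (by simp [hr]) ENNReal.ofReal_ne_top] at hint
    exact ((thickenedIndicatorAux_le_one _ _ _).trans hint).trans le_add_self

end Bump

section CodimContent

variable {T : Type*} [MetricSpace T] [MeasurableSpace T] {μ : Measure T} {A B S : Set T}
  {δ δ' : ℝ} {c : ℕ → T} {r : ℕ → ℝ}

/-- The codimension 1 weight `∑ μ(B_i) / r_i` of a sequence of balls `B_i`. A ball of radius
`r_i ≤ 0` is empty and contributes `0`. -/
def ballContent (μ : Measure T) (c : ℕ → T) (r : ℕ → ℝ) : ℝ≥0∞ :=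
  ∑' i, μ (ball (c i) (r i)) / ENNReal.ofReal (r i)

/-- The codimension 1 spherical Hausdorff content at scale `δ`, whose supremum over `δ > 0` is
`codimH`. -/
def codimContent (μ : Measure T) (δ : ℝ) (A : Set T) : ℝ≥0∞ :=
  ⨅ (c : ℕ → T) (r : ℕ → ℝ) (_ : ∀ i, r i ≤ δ) (_ : A ⊆ ⋃ i, ball (c i) (r i)),
    ballContent μ c r

lemma codimContent_le (hr : ∀ i, r i ≤ δ) (hA : A ⊆ ⋃ i, ball (c i) (r i)) :
    codimContent μ δ A ≤ ballContent μ c r :=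
  iInf₂_le_of_le c r (iInf₂_le hr hA)

lemma le_mul_codimContent {a N : ℝ≥0∞} (hN₀ : N ≠ 0) (hNt : N ≠ ⊤)
    (h : ∀ c r, (∀ i, r i ≤ δ) → A ⊆ ⋃ i, ball (c i) (r i) → a ≤ N * ballContent μ c r) :
    a ≤ N * codimContent μ δ A := by
  simp only [codimContent, ENNReal.mul_iInf_of_ne hN₀ hNt]
  exact le_iInf₂ fun c r => le_iInf₂ (h c r)

lemma codimContent_mono (h : A ⊆ B) : codimContent μ δ A ≤ codimContent μ δ B :=
  le_iInf₂ fun _ _ => le_iInf₂ fun hr hB => codimContent_le hr (h.trans hB)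

lemma codimContent_anti (h : δ ≤ δ') (A : Set T) : codimContent μ δ' A ≤ codimContent μ δ A :=
  le_iInf₂ fun _ _ => le_iInf₂ fun hr hA => codimContent_le (fun i => (hr i).trans h) hA

lemma codimH_eq_iSup (A : Set T) :
    codimH μ A = ⨆ δ : {δ : ℝ // 0 < δ}, codimContent μ δ A :=
  iSup_subtype'

lemma codimContent_le_codimH (hδ : 0 < δ) (A : Set T) : codimContent μ δ A ≤ codimH μ A :=
  le_iSup₂ (f := fun (δ : ℝ) (_ : 0 < δ) => codimContent μ δ A) δ hδ

lemma codimH_mono (h : A ⊆ B) : codimH μ A ≤ codimH μ B :=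
  iSup₂_mono fun _ _ => codimContent_mono h

lemma exists_ballContent_lt {M : ℝ≥0∞} (hA : codimH μ A < M) (hδ : 0 < δ) :
    ∃ (c : ℕ → T) (r : ℕ → ℝ), (∀ i, r i ≤ δ) ∧ A ⊆ ⋃ i, ball (c i) (r i) ∧
      ballContent μ c r < M := by
  have hlt := (codimContent_le_codimH hδ A).trans_lt hA
  simpa only [codimContent, iInf_lt_iff, exists_prop] using hlt

section BoundedOverlap

variable {s : Finset T} {R R' : ℝ} {N : ℝ≥0∞}

lemma codimContent_inter_ball_le (hδ : 0 ≤ δ) (hr : ∀ i, r i ≤ δ)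
    (hA : A ⊆ ⋃ i, ball (c i) (r i)) (x : T) :
    codimContent μ δ (A ∩ ball x R) ≤
      ∑' i, if dist (c i) x < R + δ then μ (ball (c i) (r i)) / ENNReal.ofReal (r i) else 0 := by
  refine (codimContent_le (c := c) (r := fun i => if dist (c i) x < R + δ then r i else 0)
    (fun i => ?_) ?_).trans (ENNReal.tsum_le_tsum fun i => ?_)
  · split_ifs
    exacts [hr i, hδ]
  · rintro y ⟨hyA, hyx⟩
    obtain ⟨i, hi⟩ := mem_iUnion.1 (hA hyA)
    refine mem_iUnion.2 ⟨i, ?_⟩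
    rw [if_pos]
    · exact hi
    · rw [mem_ball] at hi hyx
      linarith [dist_triangle_left (c i) x y, hr i]
  · split_ifs with h <;> simp [h]

lemma sum_codimContent_inter_ball_le (hδ : 0 ≤ δ) (hN₀ : N ≠ 0) (hNt : N ≠ ⊤)
    (hN : ∀ c : T, ((s.filter fun x => dist c x < R + δ).card : ℝ≥0∞) ≤ N) (A : Set T) :
    ∑ x ∈ s, codimContent μ δ (A ∩ ball x R) ≤ N * codimContent μ δ A := by
  refine le_mul_codimContent hN₀ hNt fun c r hr hA => ?_
  let v : ℕ → ℝ≥0∞ := fun i => μ (ball (c i) (r i)) / ENNReal.ofReal (r i)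
  calc ∑ x ∈ s, codimContent μ δ (A ∩ ball x R)
      ≤ ∑ x ∈ s, ∑' i, (if dist (c i) x < R + δ then v i else 0) :=
        Finset.sum_le_sum fun x _ => codimContent_inter_ball_le hδ hr hA x
    _ = ∑' i, ∑ x ∈ s, (if dist (c i) x < R + δ then v i else 0) :=
        (Summable.tsum_finsetSum fun _ _ => ENNReal.summable).symm
    _ ≤ ∑' i, N * v i := ENNReal.tsum_le_tsum fun i => by
        rw [← Finset.sum_filter, Finset.sum_const, nsmul_eq_mul]
        gcongr
        exact hN _
    _ = N * ballContent μ c r := ENNReal.tsum_mul_left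

lemma sum_codimH_inter_ball_le (hR : R < R') (hN₀ : N ≠ 0) (hNt : N ≠ ⊤)
    (hN : ∀ c : T, ((s.filter fun x => dist c x < R').card : ℝ≥0∞) ≤ N) (A : Set T) :
    ∑ x ∈ s, codimH μ (A ∩ ball x R) ≤ N * codimH μ A := by
  simp_rw [codimH_eq_iSup (A ∩ _)]
  rw [ENNReal.finsetSum_iSup]
  · refine iSup_le fun ⟨δ, hδ⟩ => ?_
    have hε : 0 < min δ (R' - R) := lt_min hδ (sub_pos.2 hR)
    calc ∑ x ∈ s, codimContent μ δ (A ∩ ball x R)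
        ≤ ∑ x ∈ s, codimContent μ (min δ (R' - R)) (A ∩ ball x R) :=
          Finset.sum_le_sum fun x _ => codimContent_anti (min_le_left _ _) _
      _ ≤ N * codimContent μ (min δ (R' - R)) A := by
          refine sum_codimContent_inter_ball_le hε.le hN₀ hNt (fun c => le_trans ?_ (hN c)) A
          gcongr
          linarith [min_le_right δ (R' - R)]
      _ ≤ N * codimH μ A := by
          gcongr
          exact codimContent_le_codimH hε _
  · rintro ⟨i, hi⟩ ⟨j, hj⟩
    exact ⟨⟨min i j, lt_min hi hj⟩, fun x =>
      ⟨codimContent_anti (min_le_left i j) _, codimContent_anti (min_le_right i j) _⟩⟩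

end BoundedOverlap

end CodimContent

section ChoquetIntegral

variable {T : Type*} [MetricSpace T] [MeasurableSpace T] {μ : Measure T} {A S : Set T}
  {g g' : T → ℝ≥0∞}

lemma choquetIntegral_mono (h : ∀ x ∈ S, g x ≤ g' x) :
    choquetIntegral μ S g ≤ choquetIntegral μ S g' :=
  lintegral_mono fun _ => codimH_mono fun x hx => ⟨hx.1, hx.2.trans_le (h x hx.1)⟩

lemma measurable_codimH_superlevel (S : Set T) (g : T → ℝ≥0∞) :
    Measurable fun t : ℝ => codimH μ {x | x ∈ S ∧ ENNReal.ofReal t < g x} :=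
  Antitone.measurable fun _ _ hst => codimH_mono fun _ hx =>
    ⟨hx.1, (ENNReal.ofReal_le_ofReal hst).trans_lt hx.2⟩

lemma volume_Ioi_inter_ofReal_lt (m : ℝ≥0∞) :
    volume (Ioi (0 : ℝ) ∩ {t | ENNReal.ofReal t < m}) = m := by
  rcases eq_or_ne m ⊤ with rfl | hm
  · simp
  · have hIoo : Ioi (0 : ℝ) ∩ {t | ENNReal.ofReal t < m} = Ioo 0 m.toReal := by
      ext t
      simp only [mem_inter_iff, mem_Ioi, mem_ofPred_eq, mem_Ioo, and_congr_right_iff]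
      exact fun ht => ENNReal.ofReal_lt_iff_lt_toReal ht.le hm
    rw [hIoo, Real.volume_Ioo, sub_zero, ENNReal.ofReal_toReal hm]

lemma mul_codimH_le_choquetIntegral {m : ℝ≥0∞} (h : ∀ y ∈ A, m ≤ g y) :
    m * codimH μ A ≤ choquetIntegral μ A g := by
  have hmeas : MeasurableSet (Ioi (0 : ℝ) ∩ {t | ENNReal.ofReal t < m}) :=
    measurableSet_Ioi.inter (measurableSet_lt ENNReal.measurable_ofReal measurable_const)
  calc m * codimH μ A = ∫⁻ _ in Ioi (0 : ℝ) ∩ {t | ENNReal.ofReal t < m}, codimH μ A := by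
        rw [setLIntegral_const, volume_Ioi_inter_ofReal_lt, mul_comm]
    _ ≤ ∫⁻ t in Ioi (0 : ℝ) ∩ {t | ENNReal.ofReal t < m},
          codimH μ {x | x ∈ A ∧ ENNReal.ofReal t < g x} :=
        setLIntegral_mono' hmeas fun t ht => codimH_mono fun x hx =>
          ⟨hx, ht.2.trans_le (h x hx)⟩
    _ ≤ choquetIntegral μ A g := lintegral_mono_set inter_subset_left

lemma sum_mul_codimH_inter_ball_le {s : Finset T} {R R' : ℝ} (hR : R < R') {N : ℝ≥0∞}
    (hN₀ : N ≠ 0) (hNt : N ≠ ⊤)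
    (hN : ∀ c : T, ((s.filter fun x => dist c x < R').card : ℝ≥0∞) ≤ N) {m : T → ℝ≥0∞}
    (hm : ∀ x ∈ s, ∀ y ∈ S ∩ ball x R, m x ≤ g y) :
    ∑ x ∈ s, m x * codimH μ (S ∩ ball x R) ≤ N * choquetIntegral μ S g := by
  calc ∑ x ∈ s, m x * codimH μ (S ∩ ball x R)
      ≤ ∑ x ∈ s, choquetIntegral μ (S ∩ ball x R) g :=
        Finset.sum_le_sum fun x hx => mul_codimH_le_choquetIntegral (hm x hx)
    _ = ∫⁻ t in Ioi (0 : ℝ), ∑ x ∈ s,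
          codimH μ {y | y ∈ S ∩ ball x R ∧ ENNReal.ofReal t < g y} :=
        (lintegral_finsetSum _ fun x _ => measurable_codimH_superlevel _ _).symm
    _ ≤ ∫⁻ t in Ioi (0 : ℝ), N * codimH μ {y | y ∈ S ∧ ENNReal.ofReal t < g y} := by
        refine lintegral_mono fun t => le_trans (Finset.sum_le_sum fun x _ => ?_)
          (sum_codimH_inter_ball_le hR hN₀ hNt hN _)
        exact codimH_mono fun y hy => ⟨⟨hy.1.1, hy.2⟩, hy.1.2⟩
    _ = N * choquetIntegral μ S g := lintegral_const_mul' _ _ hNt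

end ChoquetIntegral

/-! ### The Poincaré inequality across a separating set -/

/-- Every rectifiable path in `W` that joins a point of `E` and a point of its complement
meets `S`. -/
def Separates {X : Type*} [PseudoMetricSpace X] (S E W : Set X) : Prop :=
  ∀ γ : UPath X, γ.InSet W → ¬(γ.start ∈ E ↔ γ.finish ∈ E) → (S ∩ γ.trace).Nonempty

section Cutoff

variable {T : Type*} [PseudoMetricSpace T] (E : Set T) (x : ℕ → T) (r : ℕ → ℝ)

/-- The function with values in `[0, 1]` that is `1` on the balls `ball (x i) (r i)` and vanishes
off the balls of twice the radius. -/
def coverBump (y : T) : ℝ≥0∞ := ⨆ i, thickenedIndicatorAux (r i) (ball (x i) (r i)) y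

/-- An upper gradient of `coverBump x r`. -/
def coverSlope (y : T) : ℝ≥0∞ :=
  ∑' i, (ball (x i) (2 ^ 2 * r i)).indicator (fun _ => (ENNReal.ofReal (r i))⁻¹) y

/-- The characteristic function of `E`, cut off to `0` on the balls `ball (x i) (r i)`. -/
def cutoff : T → ℝ≥0∞ := E.indicator fun y => 1 - coverBump x r y

lemma coverBump_le_one (y : T) : coverBump x r y ≤ 1 :=
  iSup_le fun _ => thickenedIndicatorAux_le_one _ _ _

lemma one_le_coverBump {y : T} (hy : y ∈ ⋃ i, ball (x i) (r i)) : 1 ≤ coverBump x r y := by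
  obtain ⟨i, hi⟩ := mem_iUnion.1 hy
  exact (thickenedIndicatorAux_one _ _ hi).ge.trans (le_iSup
    (fun i => thickenedIndicatorAux (r i) (ball (x i) (r i)) y) i)

lemma coverBump_le_tsum_indicator (y : T) :
    coverBump x r y ≤ ∑' i, (ball (x i) (2 ^ 2 * r i)).indicator 1 y := by
  refine iSup_le fun i => le_trans ?_ (ENNReal.le_tsum i)
  by_cases hy : y ∈ ball (x i) (2 * r i)
  · rw [indicator_of_mem (ball_subset_ball (by linarith [pos_of_mem_ball hy]) hy)]
    exact thickenedIndicatorAux_le_one _ _ _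
  · simp [thickenedIndicatorAux_ball_eq_zero _ _ hy]

lemma cutoff_le_one (y : T) : cutoff E x r y ≤ 1 :=
  (indicator_le_self _ _ y).trans tsub_le_self

lemma cutoff_ne_top (y : T) : cutoff E x r y ≠ ⊤ :=
  ne_top_of_le_ne_top (by simp) (cutoff_le_one E x r y)

lemma abs_indicator_sub_cutoff_le (y : T) :
    |E.indicator (fun _ => (1 : ℝ)) y - (cutoff E x r y).toReal| ≤ (coverBump x r y).toReal := by
  by_cases hy : y ∈ E
  · rw [cutoff, indicator_of_mem hy, indicator_of_mem hy,
      ENNReal.toReal_sub_of_le (coverBump_le_one x r y) (by simp)]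
    simp
  · simp [cutoff, hy]

section Path

variable (γ : UPath T) {s t : ℝ}

lemma coverBump_le_add_integral (hs : s ∈ Icc γ.a γ.b) (ht : t ∈ Icc γ.a γ.b) :
    coverBump x r (γ.toFun s) ≤ coverBump x r (γ.toFun t) + γ.integral (coverSlope x r) := by
  refine iSup_le fun i => (thickenedIndicatorAux_ball_le_add_integral _ _ γ hs ht).trans ?_
  gcongr
  · exact le_iSup (fun i => thickenedIndicatorAux (r i) (ball (x i) (r i)) (γ.toFun t)) i
  · exact lintegral_mono fun _ => ENNReal.le_tsum i

variable {E x r}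

lemma cutoff_le_add_integral (hs : s ∈ Icc γ.a γ.b) (ht : t ∈ Icc γ.a γ.b)
    (hcross : γ.toFun s ∈ E → γ.toFun t ∉ E → ∃ u ∈ Icc γ.a γ.b,
      γ.toFun u ∈ ⋃ i, ball (x i) (r i)) :
    cutoff E x r (γ.toFun s) ≤ cutoff E x r (γ.toFun t) + γ.integral (coverSlope x r) := by
  by_cases hsE : γ.toFun s ∈ E
  swap
  · simp [cutoff, hsE]
  by_cases htE : γ.toFun t ∈ E
  · simp only [cutoff, indicator_of_mem hsE, indicator_of_mem htE]
    rw [tsub_le_iff_right, add_assoc, add_comm (γ.integral _)]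
    calc (1 : ℝ≥0∞) ≤ 1 - coverBump x r (γ.toFun t) + coverBump x r (γ.toFun t) := le_tsub_add
      _ ≤ _ := by
        gcongr
        exact coverBump_le_add_integral x r γ ht hs
  · obtain ⟨u, hu, hmem⟩ := hcross hsE htE
    simp only [cutoff, indicator_of_mem hsE, indicator_of_notMem htE, zero_add]
    rw [tsub_le_iff_left]
    exact (one_le_coverBump x r hmem).trans (coverBump_le_add_integral x r γ hu hs)

end Path

variable {E x r}

lemma isUpperGradient_cutoff {S : Set T} {z : T} {R : ℝ} (hR : 0 < R)
    (hsep : Separates S E (ball z (2 * R)))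
    (hcov : S ∩ ball z (2 * R) ⊆ ⋃ i, ball (x i) (r i)) :
    IsUpperGradient (fun y => (cutoff E x r y).toReal)
      fun y => coverSlope x r y + (ball z R)ᶜ.indicator (fun _ => ⊤) y := by
  intro γ
  rcases γ.hab.eq_or_lt with hab | hab
  · simp [UPath.start, UPath.finish, hab]
  by_cases hγ : γ.InSet (ball z (2 * R))
  swap
  · rw [γ.integral_eq_top_of_not_inSet hab hR hγ fun y hy => by simp [hy]]
    exact le_top
  have hcross (h : ¬(γ.start ∈ E ↔ γ.finish ∈ E)) :
      ∃ u ∈ Icc γ.a γ.b, γ.toFun u ∈ ⋃ i, ball (x i) (r i) := by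
    obtain ⟨-, hS, u, hu, rfl⟩ := hsep γ hγ h
    exact ⟨u, hu, hcov ⟨hS, hγ u hu⟩⟩
  have ha : γ.a ∈ Icc γ.a γ.b := left_mem_Icc.2 γ.hab
  have hb : γ.b ∈ Icc γ.a γ.b := right_mem_Icc.2 γ.hab
  refine le_trans ?_ (lintegral_mono fun _ => le_self_add : γ.integral (coverSlope x r) ≤ _)
  exact edist_toReal_le (cutoff_ne_top _ _ _ _) (cutoff_ne_top _ _ _ _)
    (cutoff_le_add_integral γ ha hb fun h h' => hcross fun hE => h' (hE.1 h))
    (cutoff_le_add_integral γ hb ha fun h h' => hcross fun hE => h' (hE.2 h))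

section Measure

variable [MeasurableSpace T] [OpensMeasurableSpace T]

variable (x r) in
lemma measurable_coverBump : Measurable (coverBump x r) :=
  .iSup fun _ => measurable_const.sub (measurable_infEDist.div_const _)

variable (x r) in
lemma measurable_coverSlope : Measurable (coverSlope x r) :=
  .tsum fun _ => measurable_const.indicator measurableSet_ball

lemma measurable_cutoff (hE : MeasurableSet E) : Measurable (cutoff E x r) :=
  (measurable_const.sub (measurable_coverBump x r)).indicator hE

end Measure

end Cutoff

section Poincare

variable {T : Type*} [MetricSpace T] [MeasurableSpace T] {μ : Measure T}
  {D K : ℝ≥0} {Λ : ℝ} {x : ℕ → T} {r : ℕ → ℝ}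

lemma IsUniformlyDoubling.measure_ball_four_mul_le (h : IsUniformlyDoubling μ D) (y : T) (s : ℝ) :
    μ (ball y (2 ^ 2 * s)) ≤ D ^ 2 * μ (ball y s) := by
  rcases le_or_gt s 0 with hs | hs
  · simp [ball_eq_empty.2 (by linarith : 2 ^ 2 * s ≤ 0)]
  · exact h.measure_ball_two_pow_mul_le 2 y hs

lemma measure_ball_le_mul_div (y : T) {s δ : ℝ} (hs : s ≤ δ) :
    μ (ball y s) ≤ ENNReal.ofReal δ * (μ (ball y s) / ENNReal.ofReal s) := by
  rcases le_or_gt s 0 with hs₀ | hs₀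
  · simp [ball_eq_empty.2 hs₀]
  · calc μ (ball y s) = ENNReal.ofReal s * (μ (ball y s) / ENNReal.ofReal s) := by
          rw [ENNReal.mul_div_cancel (by simp [hs₀]) (by simp)]
      _ ≤ _ := by gcongr

variable [OpensMeasurableSpace T]

lemma IsUniformlyDoubling.lintegral_coverSlope_le (h : IsUniformlyDoubling μ D) :
    ∫⁻ y, coverSlope x r y ∂μ ≤ D ^ 2 * ballContent μ x r := by
  simp only [coverSlope]
  rw [lintegral_tsum fun i => (measurable_const.indicator measurableSet_ball).aemeasurable,
    ballContent, ← ENNReal.tsum_mul_left]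
  refine ENNReal.tsum_le_tsum fun i => ?_
  rw [lintegral_indicator_const measurableSet_ball, mul_comm, ← div_eq_mul_inv, ← mul_div_assoc]
  gcongr
  exact h.measure_ball_four_mul_le _ _

lemma IsUniformlyDoubling.lintegral_coverBump_le (h : IsUniformlyDoubling μ D) {δ : ℝ}
    (hr : ∀ i, r i ≤ δ) :
    ∫⁻ y, coverBump x r y ∂μ ≤ ENNReal.ofReal δ * (D ^ 2 * ballContent μ x r) := by
  refine (lintegral_mono (coverBump_le_tsum_indicator x r)).trans ?_
  rw [lintegral_tsum fun i => (measurable_one.indicator measurableSet_ball).aemeasurable,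
    ballContent, ← ENNReal.tsum_mul_left, ← ENNReal.tsum_mul_left]
  refine ENNReal.tsum_le_tsum fun i => ?_
  rw [lintegral_indicator_one measurableSet_ball, mul_left_comm]
  refine (h.measure_ball_four_mul_le _ _).trans ?_
  gcongr
  exact measure_ball_le_mul_div _ (hr i)

lemma lintegral_abs_indicator_sub_le (E B : Set T) (x : ℕ → T) (r : ℕ → ℝ) (m : ℝ) :
    ∫⁻ y in B, ENNReal.ofReal |E.indicator (fun _ => (1 : ℝ)) y - m| ∂μ ≤
      (∫⁻ y in B, ENNReal.ofReal |(cutoff E x r y).toReal - m| ∂μ) + ∫⁻ y, coverBump x r y ∂μ := by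
  calc _ ≤ ∫⁻ y in B, (ENNReal.ofReal |(cutoff E x r y).toReal - m| + coverBump x r y) ∂μ := by
        refine lintegral_mono fun y => ?_
        have hb : coverBump x r y ≠ ⊤ := ne_top_of_le_ne_top (by simp) (coverBump_le_one x r y)
        rw [← ENNReal.ofReal_toReal hb, ← ENNReal.ofReal_add (abs_nonneg _) (by positivity)]
        refine ENNReal.ofReal_le_ofReal ((abs_sub_le _ (cutoff E x r y).toReal m).trans ?_)
        linarith [abs_indicator_sub_cutoff_le E x r y]
    _ = _ := lintegral_add_right _ (measurable_coverBump x r)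
    _ ≤ _ := by gcongr; exact Measure.restrict_le_self

theorem IsPIMeasure.lintegral_abs_cutoff_sub_le [IsFiniteMeasure μ] (h : IsPIMeasure μ D K Λ)
    {S E : Set T} (hE : MeasurableSet E) {z : T} {s : ℝ} (hs : 0 < s)
    (hsep : Separates S E (ball z (2 * (Λ * s))))
    (hcov : S ∩ ball z (2 * (Λ * s)) ⊆ ⋃ i, ball (x i) (r i)) :
    ∫⁻ y in ball z s, ENNReal.ofReal
        |(cutoff E x r y).toReal - ⨍ w in ball z s, (cutoff E x r w).toReal ∂μ| ∂μ ≤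
      K * ENNReal.ofReal s * (D ^ 2 * ballContent μ x r) := by
  have hΛs : 0 < Λ * s := mul_pos (one_pos.trans_le h.one_le_Λ) hs
  have hcut : Measurable fun y => (cutoff E x r y).toReal := (measurable_cutoff hE).ennreal_toReal
  have hint : Integrable (fun y => (cutoff E x r y).toReal) μ :=
    .of_bound hcut.aestronglyMeasurable 1 <| ae_of_all _ fun y => by
      rw [Real.norm_of_nonneg ENNReal.toReal_nonneg]
      exact ENNReal.toReal_mono (by simp) (cutoff_le_one E x r y)
  refine (h.poincare _ _ hint.locallyIntegrable ((measurable_coverSlope x r).add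
    (measurable_const.indicator measurableSet_ball.compl))
    (isUpperGradient_cutoff hΛs hsep hcov) z s hs).trans ?_
  gcongr
  calc ∫⁻ y in ball z (Λ * s), (coverSlope x r y + (ball z (Λ * s))ᶜ.indicator (fun _ => ⊤) y) ∂μ
      = ∫⁻ y in ball z (Λ * s), coverSlope x r y ∂μ :=
        setLIntegral_congr_fun measurableSet_ball fun y hy => by simp [hy]
    _ ≤ ∫⁻ y, coverSlope x r y ∂μ := setLIntegral_le_lintegral _ _
    _ ≤ _ := h.lintegral_coverSlope_le

/-- The cover is chosen at scale `s`, so that the balls on which the characteristic function is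
cut off have total measure at most a multiple of `s M`. -/
theorem IsPIMeasure.exists_lintegral_indicator_sub_le [IsFiniteMeasure μ]
    (h : IsPIMeasure μ D K Λ) {S E : Set T} (hE : MeasurableSet E) {z : T} {s : ℝ} (hs : 0 < s)
    (hsep : Separates S E (ball z (2 * (Λ * s)))) {M : ℝ≥0∞}
    (hM : codimH μ (S ∩ ball z (2 * (Λ * s))) < M) :
    ∃ c : ℝ, ∫⁻ y in ball z s, ENNReal.ofReal |E.indicator (fun _ => (1 : ℝ)) y - c| ∂μ ≤
      (K + 1) * D ^ 2 * ENNReal.ofReal s * M := by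
  obtain ⟨x, r, hr, hcov, hlt⟩ := exists_ballContent_lt hM hs
  refine ⟨⨍ y in ball z s, (cutoff E x r y).toReal ∂μ, ?_⟩
  calc _ ≤ K * ENNReal.ofReal s * (D ^ 2 * ballContent μ x r) +
        ENNReal.ofReal s * (D ^ 2 * ballContent μ x r) :=
        (lintegral_abs_indicator_sub_le E _ x r _).trans <|
          add_le_add (h.lintegral_abs_cutoff_sub_le hE hs hsep hcov) (h.lintegral_coverBump_le hr)
    _ = (K + 1) * D ^ 2 * ENNReal.ofReal s * ballContent μ x r := by ring
    _ ≤ _ := by gcongr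

end Poincare

/-! ### Averages against tent functions -/

section Tent

variable {T : Type*} [PseudoMetricSpace T] {r : ℝ} {z z' : T}

/-- The tent function of radius `r` centred at `z`, a Lipschitz substitute for the
characteristic function of `ball z r`. -/
def tent (r : ℝ) (z y : T) : ℝ := max 0 (1 - dist z y / r)

lemma tent_nonneg (r : ℝ) (z y : T) : 0 ≤ tent r z y := le_max_left _ _

lemma tent_le_one (hr : 0 ≤ r) (z y : T) : tent r z y ≤ 1 :=
  max_le zero_le_one (sub_le_self _ (by positivity))

lemma tent_eq_zero (hr : 0 < r) {y : T} (hy : y ∉ ball z r) : tent r z y = 0 := by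
  refine max_eq_left (sub_nonpos.2 ((one_le_div hr).2 ?_))
  simpa [dist_comm] using hy

lemma abs_tent_sub_tent_le (hr : 0 < r) (z z' y : T) :
    |tent r z' y - tent r z y| ≤ dist z z' / r := by
  refine (abs_max_sub_max_le_max 0 _ 0 _).trans (max_le (by rw [sub_self, abs_zero]; positivity) ?_)
  rw [sub_sub_sub_cancel_left, ← sub_div, abs_div, abs_of_pos hr]
  gcongr
  exact abs_dist_sub_le _ _ _

lemma continuous_tent (r : ℝ) (z : T) : Continuous (tent r z) := by
  unfold tent
  fun_prop

lemma tent_eq_zero_of_notMem_ball_two_mul (hd : dist z z' < r) {y : T} (hy : y ∉ ball z (2 * r)) :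
    tent r z' y = 0 :=
  tent_eq_zero (dist_nonneg.trans_lt hd)
    fun hy' => hy <| ball_subset_ball' (by rw [dist_comm]; linarith) hy'

lemma abs_tent_le_indicator (hd : dist z z' < r) (y : T) :
    |tent r z' y| ≤ (ball z (2 * r)).indicator (fun _ => (1 : ℝ)) y := by
  by_cases hy : y ∈ ball z (2 * r)
  · rw [indicator_of_mem hy, abs_of_nonneg (tent_nonneg _ _ _)]
    exact tent_le_one (dist_nonneg.trans hd.le) _ _
  · simp [hy, tent_eq_zero_of_notMem_ball_two_mul hd hy]

lemma abs_tent_sub_tent_le_indicator (hd : dist z z' < r) (y : T) :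
    |tent r z' y - tent r z y| ≤ (ball z (2 * r)).indicator (fun _ => dist z z' / r) y := by
  have hr : 0 < r := dist_nonneg.trans_lt hd
  by_cases hy : y ∈ ball z (2 * r)
  · rw [indicator_of_mem hy]
    exact abs_tent_sub_tent_le hr _ _ _
  · simp [hy, tent_eq_zero_of_notMem_ball_two_mul hd hy,
      tent_eq_zero_of_notMem_ball_two_mul (dist_self z ▸ hr) hy]

variable [MeasurableSpace T]

/-- The average of `g` against the tent function of radius `r` centred at `z`. -/
def tentAvg (μ : Measure T) (r : ℝ) (z : T) (g : T → ℝ) : ℝ :=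
  (∫ y, tent r z y * g y ∂μ) / ∫ y, tent r z y ∂μ

variable [OpensMeasurableSpace T] {μ : Measure T} {g : T → ℝ}

lemma integrable_tent_mul (hr : 0 ≤ r) (z : T) (hg : Integrable g μ) :
    Integrable (fun y => tent r z y * g y) μ :=
  hg.bdd_mul (continuous_tent r z).measurable.aestronglyMeasurable (c := 1) <|
    ae_of_all _ fun y => by
      rw [Real.norm_of_nonneg (tent_nonneg _ _ _)]
      exact tent_le_one hr _ _

lemma integrable_tent [IsFiniteMeasure μ] (hr : 0 ≤ r) (z : T) : Integrable (tent r z) μ := by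
  simpa using integrable_tent_mul (μ := μ) hr z (integrable_const (1 : ℝ))

lemma measureReal_ball_half_le_integral_tent [IsFiniteMeasure μ] (hr : 0 < r) (z : T) :
    μ.real (ball z (r / 2)) ≤ 2 * ∫ y, tent r z y ∂μ := by
  rw [← integral_indicator_one measurableSet_ball, ← integral_const_mul]
  refine integral_mono ((integrable_const (1 : ℝ)).indicator measurableSet_ball)
    ((integrable_tent hr.le z).const_mul 2) fun y => ?_
  by_cases hy : y ∈ ball z (r / 2)
  · have hle : dist z y / r ≤ 1 / 2 := by
      rw [div_le_iff₀ hr]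
      rw [mem_ball, dist_comm] at hy
      linarith
    have htent : 1 - dist z y / r ≤ tent r z y := le_max_right _ _
    simp only [indicator_of_mem hy, Pi.one_apply]
    linarith
  · simp only [indicator_of_notMem hy]
    linarith [tent_nonneg r z y]

end Tent

lemma abs_integral_mul_le {X : Type*} [MeasurableSpace X] {μ : Measure X} {B : Set X}
    (hB : MeasurableSet B) {k G : X → ℝ} {c : ℝ} (hk : ∀ y, |k y| ≤ B.indicator (fun _ => c) y)
    (hG : IntegrableOn G B μ) : |∫ y, k y * G y ∂μ| ≤ c * ∫ y in B, |G y| ∂μ := by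
  rw [← integral_const_mul, ← integral_indicator hB]
  refine norm_integral_le_of_norm_le (f := fun y => k y * G y)
    ((integrable_indicator_iff hB).2 (hG.abs.const_mul c)) (ae_of_all _ fun y => ?_)
  rw [norm_mul, Real.norm_eq_abs, Real.norm_eq_abs]
  refine (mul_le_mul_of_nonneg_right (hk y) (abs_nonneg _)).trans_eq ?_
  by_cases hy : y ∈ B <;> simp [hy]

lemma abs_div_sub_div_le {P P' A A' J e m a b : ℝ} (hm : 0 < m) (ha : 0 < a) (hA : m ≤ a * A)
    (hA' : m ≤ a * A') (hP : |P - P'| ≤ e * J) (hP' : |P'| ≤ J) (hAA' : |A' - A| ≤ e * (b * m)) :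
    |P / A - P' / A'| ≤ a * (1 + a * b) * e * J / m := by
  have hA₀ : 0 < A := pos_of_mul_pos_right (hm.trans_le hA) ha.le
  have hA₀' : 0 < A' := pos_of_mul_pos_right (hm.trans_le hA') ha.le
  have hinv : A⁻¹ ≤ a / m := by
    rw [inv_eq_one_div, div_le_div_iff₀ hA₀ hm]
    linarith
  have hinv' : A'⁻¹ ≤ a / m := by
    rw [inv_eq_one_div, div_le_div_iff₀ hA₀' hm]
    linarith
  have hJ : 0 ≤ J := (abs_nonneg _).trans hP'
  calc |P / A - P' / A'| = |((P - P') + P' * (A' - A) * A'⁻¹) * A⁻¹| := by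
        congr 1
        field_simp
        ring
    _ ≤ (|P - P'| + |P'| * |A' - A| * A'⁻¹) * A⁻¹ := by
        rw [abs_mul, abs_of_pos (inv_pos.2 hA₀)]
        gcongr
        refine (abs_add_le _ _).trans_eq ?_
        rw [abs_mul, abs_mul, abs_of_pos (inv_pos.2 hA₀')]
    _ ≤ (e * J + J * (e * (b * m)) * (a / m)) * (a / m) := by
        have := (abs_nonneg _).trans hP
        have := (abs_nonneg _).trans hAA'
        gcongr
    _ = _ := by
        field_simp

namespace IsUniformlyDoubling

variable {T : Type*} [PseudoMetricSpace T] [MeasurableSpace T] {μ : Measure T} [IsFiniteMeasure μ]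
  {D : ℝ≥0} {r : ℝ} {z z' : T} {g : T → ℝ}

lemma measureReal_ball_le_pow_mul (h : IsUniformlyDoubling μ D) (k : ℕ) {R : ℝ}
    (hr : 0 < r) (hR : R + dist z z' ≤ 2 ^ k * r) :
    μ.real (ball z R) ≤ D ^ k * μ.real (ball z' r) := by
  simpa [Measure.real] using ENNReal.toReal_mono (by finiteness) (h.measure_ball_le_pow_mul k hr hR)

lemma measureReal_ball_pos (h : IsUniformlyDoubling μ D) (z : T) (hr : 0 < r) :
    0 < μ.real (ball z r) := ENNReal.toReal_pos (h.ball_pos z r hr).ne' (measure_ne_top μ _)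

variable [OpensMeasurableSpace T]

lemma measureReal_ball_le_integral_tent (h : IsUniformlyDoubling μ D) (hd : dist z z' < r) :
    μ.real (ball z r) ≤ 2 * D ^ 2 * ∫ y, tent r z' y ∂μ := by
  have hr : 0 < r := dist_nonneg.trans_lt hd
  calc μ.real (ball z r) ≤ D ^ 2 * μ.real (ball z' (r / 2)) :=
        h.measureReal_ball_le_pow_mul 2 (half_pos hr) (by linarith)
    _ ≤ D ^ 2 * (2 * ∫ y, tent r z' y ∂μ) := by
        gcongr
        exact measureReal_ball_half_le_integral_tent hr z'
    _ = _ := by ring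

lemma integral_tent_pos (h : IsUniformlyDoubling μ D) (hr : 0 < r) (z : T) :
    0 < ∫ y, tent r z y ∂μ := by
  linarith [measureReal_ball_half_le_integral_tent (μ := μ) hr z,
    h.measureReal_ball_pos z (half_pos hr)]

lemma tentAvg_sub_const (h : IsUniformlyDoubling μ D) (hr : 0 < r) (z : T)
    (hg : Integrable g μ) (c : ℝ) :
    tentAvg μ r z (fun y => g y - c) = tentAvg μ r z g - c := by
  simp only [tentAvg, mul_sub]
  rw [integral_sub (integrable_tent_mul hr.le z hg) ((integrable_tent hr.le z).mul_const c),
    integral_mul_const, sub_div, mul_div_cancel_left₀ _ (h.integral_tent_pos hr z).ne']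

lemma abs_integral_tent_sub_le (h : IsUniformlyDoubling μ D) (hd : dist z z' < r) :
    |(∫ y, tent r z' y ∂μ) - ∫ y, tent r z y ∂μ| ≤ dist z z' / r * (D * μ.real (ball z r)) := by
  have hr : 0 < r := dist_nonneg.trans_lt hd
  have hball : μ.real (ball z (2 * r)) ≤ D * μ.real (ball z r) := by
    simpa using h.measureReal_ball_le_pow_mul 1 (z := z) (z' := z) (R := 2 * r) hr (by simp)
  calc _ = |∫ y, (tent r z' y - tent r z y) * 1 ∂μ| := by
        simp only [mul_one]
        rw [integral_sub (integrable_tent hr.le z') (integrable_tent hr.le z)]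
    _ ≤ dist z z' / r * ∫ _ in ball z (2 * r), |(1 : ℝ)| ∂μ :=
        abs_integral_mul_le measurableSet_ball (abs_tent_sub_tent_le_indicator hd)
          (integrable_const _)
    _ = dist z z' / r * μ.real (ball z (2 * r)) := by simp
    _ ≤ _ := by gcongr

lemma abs_tentAvg_sub_tentAvg_le (h : IsUniformlyDoubling μ D) (hd : dist z z' < r)
    (hg : Integrable g μ) :
    |tentAvg μ r z g - tentAvg μ r z' g| ≤ 2 * D ^ 2 * (1 + 2 * D ^ 2 * D) * (dist z z' / r) *
      (∫ y in ball z (2 * r), |g y| ∂μ) / μ.real (ball z r) := by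
  have hr : 0 < r := dist_nonneg.trans_lt hd
  have hm : 0 < μ.real (ball z r) := h.measureReal_ball_pos z hr
  have hA := h.measureReal_ball_le_integral_tent (z := z) (z' := z) (dist_self z ▸ hr)
  refine abs_div_sub_div_le hm
    (pos_of_mul_pos_left (hm.trans_le hA) (h.integral_tent_pos hr z).le) hA
    (h.measureReal_ball_le_integral_tent hd) ?_ ?_ (h.abs_integral_tent_sub_le hd)
  · rw [abs_sub_comm, ← integral_sub (integrable_tent_mul hr.le z' hg)
      (integrable_tent_mul hr.le z hg)]
    simp only [← sub_mul]
    exact abs_integral_mul_le measurableSet_ball (abs_tent_sub_tent_le_indicator hd) hg.integrableOn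
  · simpa using abs_integral_mul_le measurableSet_ball (abs_tent_le_indicator hd) hg.integrableOn

lemma edist_tentAvg_le_lintegral (h : IsUniformlyDoubling μ D) (hd : dist z z' < r)
    (hg : Integrable g μ) (c : ℝ) :
    edist (tentAvg μ r z g) (tentAvg μ r z' g) ≤
      2 * D ^ 2 * (1 + 2 * D ^ 2 * D) * (edist z z' / ENNReal.ofReal r) *
        (∫⁻ y in ball z (2 * r), ENNReal.ofReal |g y - c| ∂μ) / μ (ball z r) := by
  have hr : 0 < r := dist_nonneg.trans_lt hd
  have hgc : Integrable (fun y => g y - c) μ := hg.sub (integrable_const c)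
  rw [edist_dist, Real.dist_eq, ← sub_sub_sub_cancel_right _ _ c, ← h.tentAvg_sub_const hr z hg c,
    ← h.tentAvg_sub_const hr z' hg c]
  refine (ENNReal.ofReal_le_ofReal (h.abs_tentAvg_sub_tentAvg_le hd hgc)).trans_eq ?_
  have hconst : ENNReal.ofReal (2 * D ^ 2 * (1 + 2 * D ^ 2 * D)) =
      2 * D ^ 2 * (1 + 2 * D ^ 2 * D) := by
    exact_mod_cast ENNReal.ofReal_coe_nnreal (p := (2 * D ^ (2 : ℕ) * (1 + 2 * D ^ (2 : ℕ) * D)))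
  rw [ENNReal.ofReal_div_of_pos (h.measureReal_ball_pos z hr), ENNReal.ofReal_mul (by positivity),
    ENNReal.ofReal_mul (by positivity), ENNReal.ofReal_div_of_pos hr, ← edist_dist, Measure.real,
    ENNReal.ofReal_toReal (measure_ne_top μ _), hconst,
    ofReal_integral_eq_lintegral_ofReal hgc.abs.integrableOn (ae_of_all _ fun _ => abs_nonneg _)]

end IsUniformlyDoubling

/-- The constant of the variation estimate `IsPIMeasure.edist_tentAvg_le`. -/
def tentConst (D K : ℝ≥0) : ℝ≥0 := 2 * D ^ 2 * (1 + 2 * D ^ 2 * D) * ((K + 1) * D ^ 2 * 2)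

theorem IsPIMeasure.edist_tentAvg_le {T : Type*} [MetricSpace T] [MeasurableSpace T]
    [OpensMeasurableSpace T] {μ : Measure T} [IsFiniteMeasure μ] {D K : ℝ≥0} {Λ : ℝ}
    (h : IsPIMeasure μ D K Λ) {S E : Set T} (hE : MeasurableSet E) {z z' : T} {r : ℝ}
    (hd : dist z z' < r) {g : T → ℝ} (hg : Integrable g μ) {a : ℝ}
    (hgE : ∀ y ∈ ball z (2 * r), g y = a + E.indicator (fun _ => (1 : ℝ)) y)
    (hsep : Separates S E (ball z (4 * Λ * r)))
    (hS : codimH μ (S ∩ ball z (4 * Λ * r)) ≠ ⊤) :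
    edist (tentAvg μ r z g) (tentAvg μ r z' g) ≤
      tentConst D K * codimH μ (S ∩ ball z (4 * Λ * r)) / μ (ball z r) * edist z z' := by
  have hr : 0 < r := dist_nonneg.trans_lt hd
  rw [show 4 * Λ * r = 2 * (Λ * (2 * r)) by ring] at hsep hS ⊢
  set H := codimH μ (S ∩ ball z (2 * (Λ * (2 * r))))
  have hbound (M : ℝ≥0∞) (hM : H < M) : edist (tentAvg μ r z g) (tentAvg μ r z' g) ≤
      tentConst D K * M / μ (ball z r) * edist z z' := by
    obtain ⟨c, hc⟩ := h.exists_lintegral_indicator_sub_le hE (by positivity) hsep hM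
    have hcongr : ∫⁻ y in ball z (2 * r), ENNReal.ofReal |g y - (a + c)| ∂μ =
        ∫⁻ y in ball z (2 * r), ENNReal.ofReal |E.indicator (fun _ => (1 : ℝ)) y - c| ∂μ :=
      setLIntegral_congr_fun measurableSet_ball fun y hy => by
        simp only [hgE y hy, add_sub_add_left_eq_sub]
    calc _ ≤ _ := h.edist_tentAvg_le_lintegral hd hg (a + c)
      _ ≤ 2 * D ^ 2 * (1 + 2 * D ^ 2 * D) * (edist z z' / ENNReal.ofReal r) *
          ((K + 1) * D ^ 2 * ENNReal.ofReal (2 * r) * M) / μ (ball z r) := by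
        rw [hcongr]
        gcongr
      _ = tentConst D K * M / μ (ball z r) * edist z z' *
          (ENNReal.ofReal r * (ENNReal.ofReal r)⁻¹) := by
        rw [ENNReal.ofReal_mul two_pos.le, ENNReal.ofReal_ofNat, tentConst]
        push_cast
        simp only [div_eq_mul_inv]
        ring
      _ = _ := by rw [ENNReal.mul_inv_cancel (by simpa using hr) (by simp), mul_one]
  have hq : (tentConst D K : ℝ≥0∞) * (μ (ball z r))⁻¹ * edist z z' ≠ ⊤ := by
    have := ENNReal.inv_ne_top.2 (h.ball_pos z r hr).ne'
    finiteness
  have : (𝓝[>] H).NeBot := nhdsGT_neBot_of_exists_gt ⟨⊤, hS.lt_top⟩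
  have hcomm (M : ℝ≥0∞) : tentConst D K * M / μ (ball z r) * edist z z' =
      tentConst D K * (μ (ball z r))⁻¹ * edist z z' * M := by
    rw [div_eq_mul_inv]
    ring
  simp only [hcomm] at hbound ⊢
  exact ge_of_tendsto (x := 𝓝[>] H)
    ((ENNReal.Tendsto.const_mul tendsto_id (.inr hq)).mono_left nhdsWithin_le_nhds)
    (eventually_nhdsWithin_of_forall hbound)

/-! ### Separated nets -/

lemma exists_finset_isSeparated_isCover (T : Type*) [PseudoEMetricSpace T] [CompactSpace T]
    {ε : ℝ≥0} (hε : ε ≠ 0) :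
    ∃ s : Finset T, IsSeparated (ε : ℝ≥0∞) (s : Set T) ∧ IsCover ε univ (s : Set T) := by
  have hhalf : 2 * (ε / 2) = ε := mul_div_cancel₀ _ two_ne_zero
  obtain ⟨N, -, hfin, hN⟩ :=
    exists_finite_isCover_of_isCompact (by simpa using hε : ε / 2 ≠ 0) (isCompact_univ (X := T))
  have hpack : packingNumber ε (univ : Set T) ≠ ⊤ :=
    ne_top_of_le_ne_top hfin.encard_lt_top.ne <|
      (hhalf ▸ packingNumber_two_mul_le_externalCoveringNumber (ε / 2) univ).trans
        hN.externalCoveringNumber_le_encard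
  have hmax : (maximalSeparatedSet ε (univ : Set T)).Finite := by
    rwa [← encard_ne_top_iff, encard_maximalSeparatedSet hpack]
  refine ⟨hmax.toFinset, ?_, ?_⟩
  · simpa using isSeparated_maximalSeparatedSet
  · simpa using isCover_maximalSeparatedSet hpack

lemma IsUniformlyDoubling.card_filter_dist_lt_le {T : Type*} [PseudoMetricSpace T]
    [MeasurableSpace T] [OpensMeasurableSpace T] {μ : Measure T} [IsFiniteMeasure μ] {D : ℝ≥0}
    (h : IsUniformlyDoubling μ D) {s : Finset T} {ε : ℝ≥0} (hε : 0 < ε)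
    (hs : IsSeparated (ε : ℝ≥0∞) (s : Set T)) {R : ℝ} {k : ℕ}
    (hk : 2 * R + ε / 2 ≤ 2 ^ k * (ε / 2)) (c : T) :
    ((s.filter fun x => dist c x < R).card : ℝ≥0∞) ≤ D ^ k := by
  set F := s.filter fun x => dist c x < R
  have hFR {x : T} (hx : x ∈ F) : dist c x < R := (Finset.mem_filter.1 hx).2
  have hε' : (0 : ℝ) < ε / 2 := by positivity
  rcases F.eq_empty_or_nonempty with hempty | ⟨x₁, hx₁⟩
  · simp [hempty]
  have hball : 0 < μ (ball c (R + ε / 2)) :=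
    h.ball_pos c _ (by linarith [dist_nonneg.trans_lt (hFR hx₁)])
  have hdisj : PairwiseDisjoint (↑F) fun x : T => ball x (ε / 2) := fun x hx y hy hxy => by
    have hlt : (ε : ℝ≥0∞) < edist x y :=
      hs (Finset.mem_filter.1 hx).1 (Finset.mem_filter.1 hy).1 hxy
    rw [edist_nndist, ENNReal.coe_lt_coe, ← NNReal.coe_lt_coe, coe_nndist] at hlt
    exact ball_disjoint_ball (by linarith)
  refine (ENNReal.mul_le_mul_iff_left hball.ne' (measure_ne_top μ _)).1 ?_
  calc F.card * μ (ball c (R + ε / 2)) = ∑ x ∈ F, μ (ball c (R + ε / 2)) := by simp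
    _ ≤ ∑ x ∈ F, D ^ k * μ (ball x (ε / 2)) :=
        Finset.sum_le_sum fun x hx => h.measure_ball_le_pow_mul k hε' (by linarith [hFR hx])
    _ = D ^ k * μ (⋃ x ∈ F, ball x (ε / 2)) := by
        rw [measure_biUnion_finset hdisj fun _ _ => measurableSet_ball, Finset.mul_sum]
    _ ≤ D ^ k * μ (ball c (R + ε / 2)) := by
        gcongr
        refine iUnion₂_subset fun x hx => ball_subset_ball' ?_
        rw [dist_comm]
        linarith [hFR hx]

/-! ### Smoothing of a lift away from the level set -/

/-- The representative in `[0, 1)` of a point of the circle. -/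
def fracRep (u : UnitAddCircle) : ℝ := AddCircle.measurableEquivIco 1 0 u

/-- The representative in `[-1/2, 1/2)` of a point of the circle. -/
def balRep (u : UnitAddCircle) : ℝ := AddCircle.measurableEquivIco 1 (-1 / 2) u

lemma measurable_fracRep : Measurable fracRep :=
  measurable_subtype_coe.comp (AddCircle.measurableEquivIco 1 0).measurable

lemma measurable_balRep : Measurable balRep :=
  measurable_subtype_coe.comp (AddCircle.measurableEquivIco 1 (-1 / 2)).measurable

lemma coe_fracRep (u : UnitAddCircle) : (fracRep u : UnitAddCircle) = u :=
  AddCircle.coe_equivIco (p := (1 : ℝ)) (a := 0)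

lemma coe_balRep (u : UnitAddCircle) : (balRep u : UnitAddCircle) = u :=
  AddCircle.coe_equivIco (p := (1 : ℝ)) (a := -1 / 2)

lemma fracRep_mem_Ico (u : UnitAddCircle) : fracRep u ∈ Ico (0 : ℝ) 1 := by
  simpa [fracRep] using (AddCircle.measurableEquivIco 1 0 u).2

lemma balRep_mem_Ico (u : UnitAddCircle) : balRep u ∈ Ico (-1 / 2 : ℝ) (1 / 2) := by
  obtain ⟨hl, hr⟩ := (AddCircle.measurableEquivIco 1 (-1 / 2) u).2
  exact ⟨hl, hr.trans_eq (by norm_num)⟩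

lemma fracRep_coe {x : ℝ} (hx : x ∈ Ico (0 : ℝ) 1) : fracRep (x : UnitAddCircle) = x :=
  congrArg Subtype.val (AddCircle.equivIco_coe_eq (p := (1 : ℝ)) (a := 0) (by simpa using hx))

lemma balRep_coe {x : ℝ} (hx : x ∈ Ico (-1 / 2 : ℝ) (1 / 2)) : balRep (x : UnitAddCircle) = x :=
  congrArg Subtype.val <| AddCircle.equivIco_coe_eq (p := (1 : ℝ)) (a := -1 / 2)
    ⟨hx.1, by linarith [hx.2]⟩

lemma abs_balRep (u : UnitAddCircle) : |balRep u| = ‖u‖ := by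
  obtain ⟨hl, hr⟩ := balRep_mem_Ico u
  conv_rhs => rw [← coe_balRep u]
  refine ((AddCircle.norm_coe_eq_abs_iff (1 : ℝ) one_ne_zero).2 ?_).symm
  rw [abs_one, abs_le]
  constructor <;> linarith

lemma balRep_sub_balRep {u v w : UnitAddCircle} (hu : ‖v - u‖ < 1 / 4) (hw : ‖v - w‖ < 1 / 4) :
    balRep (v - u) - balRep (v - w) = balRep (w - u) := by
  rw [← abs_balRep, abs_lt] at hu hw
  have : w - u = ((balRep (v - u) - balRep (v - w) : ℝ) : UnitAddCircle) := by
    rw [AddCircle.coe_sub, coe_balRep, coe_balRep]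
    abel
  rw [this, balRep_coe ⟨by linarith, by linarith⟩]

lemma continuousAt_balRep {u : UnitAddCircle} (hu : ‖u‖ < 1 / 2) : ContinuousAt balRep u := by
  refine continuous_subtype_val.continuousAt.comp
    (AddCircle.continuousAt_equivIco 1 (-1 / 2) (x := u) ?_)
  rintro rfl
  rw [(AddCircle.norm_coe_eq_abs_iff (1 : ℝ) one_ne_zero).2 (by norm_num [abs_of_neg])] at hu
  norm_num at hu

lemma coe_fracRep_add_balRep_sub (u v : UnitAddCircle) :
    ((fracRep u + balRep (v - u) : ℝ) : UnitAddCircle) = v := by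
  rw [AddCircle.coe_add, coe_fracRep, coe_balRep, add_sub_cancel]

lemma fracRep_eq_of_mem_Ico {u v : UnitAddCircle} {m : ℤ}
    (hm : fracRep u + balRep (v - u) ∈ Ico (m : ℝ) (m + 1)) :
    fracRep v = fracRep u + balRep (v - u) - m := by
  have hv : v = ((fracRep u + balRep (v - u) - m : ℝ) : UnitAddCircle) := by
    rw [AddCircle.coe_sub, coe_fracRep_add_balRep_sub, intCast_coe_eq_zero, sub_zero]
  conv_lhs => rw [hv]
  exact fracRep_coe ⟨by linarith [hm.1], by linarith [hm.2]⟩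

lemma exists_balRep_sub_fracRep_eq (u : UnitAddCircle) : ∃ k : ℤ, ∀ v, ‖v - u‖ < 1 / 2 →
    balRep (v - u) - fracRep v = (k - 1 - fracRep u) +
      {v | (k : ℝ) ≤ fracRep u + balRep (v - u)}.indicator (fun _ => (1 : ℝ)) v := by
  obtain ⟨k, hk⟩ : ∃ k : ℤ, ∀ v, ‖v - u‖ < 1 / 2 →
      fracRep u + balRep (v - u) ∈ Ico (k - 1 : ℝ) (k + 1) := by
    obtain ⟨hu₀, hu₁⟩ := fracRep_mem_Ico u
    simp only [← abs_balRep, abs_lt]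
    rcases le_total (1 / 2) (fracRep u) with h | h
    · refine ⟨1, fun v hv => ?_⟩
      push_cast
      constructor <;> linarith
    · refine ⟨0, fun v hv => ?_⟩
      push_cast
      constructor <;> linarith
  refine ⟨k, fun v hv => ?_⟩
  obtain ⟨hl, hr⟩ := hk v hv
  by_cases hkv : (k : ℝ) ≤ fracRep u + balRep (v - u)
  · have hmem : v ∈ {v | (k : ℝ) ≤ fracRep u + balRep (v - u)} := hkv
    rw [indicator_of_mem hmem, fracRep_eq_of_mem_Ico ⟨hkv, hr⟩]
    ring
  · have hmem : v ∉ {v | (k : ℝ) ≤ fracRep u + balRep (v - u)} := hkv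
    rw [indicator_of_notMem hmem, fracRep_eq_of_mem_Ico (m := k - 1)
      ⟨by push_cast; exact hl, by push_cast; linarith⟩]
    push_cast
    ring

lemma tentAvg_congr {T : Type*} [PseudoMetricSpace T] [MeasurableSpace T] {μ : Measure T} {r : ℝ}
    (hr : 0 < r) {z : T} {g g' : T → ℝ} (h : ∀ y ∈ ball z r, g y = g' y) :
    tentAvg μ r z g = tentAvg μ r z g' := by
  have hmul (y : T) : tent r z y * g y = tent r z y * g' y := by
    by_cases hy : y ∈ ball z r
    · rw [h y hy]
    · rw [tent_eq_zero hr hy, zero_mul, zero_mul]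
  simp only [tentAvg, hmul]

/-- If `F` is a lift of `φ ∘ π` then, up to an additive integer at each point, the function
`F + smoothing μ φ r ∘ π` is the average over balls of radius `r` of the continuation of `F`
minus the sawtooth function `fracRep ∘ φ`; so it varies only near the level set `φ = 0`. -/
def smoothing {T : Type*} [PseudoMetricSpace T] [MeasurableSpace T] (μ : Measure T)
    (φ : T → UnitAddCircle) (r : ℝ) (z : T) : ℝ :=
  tentAvg μ r z fun y => balRep (φ y - φ z) - fracRep (φ y)

lemma abs_balRep_sub_fracRep_le (u v : UnitAddCircle) : |balRep u - fracRep v| ≤ 2 := by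
  obtain ⟨hul, hur⟩ := balRep_mem_Ico u
  obtain ⟨hvl, hvr⟩ := fracRep_mem_Ico v
  rw [abs_le]
  constructor <;> linarith

lemma measurable_balRep_sub {T : Type*} [TopologicalSpace T] [MeasurableSpace T]
    [OpensMeasurableSpace T] {φ : T → UnitAddCircle} (hφ : Continuous φ) (z : T) :
    Measurable fun y => balRep (φ y - φ z) :=
  measurable_balRep.comp (hφ.sub continuous_const).measurable

section Smoothing

variable {T : Type*} [PseudoMetricSpace T] [MeasurableSpace T] [OpensMeasurableSpace T]
  {μ : Measure T} [IsFiniteMeasure μ] {φ : T → UnitAddCircle} {r : ℝ}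

lemma abs_smoothing_le (hr : 0 ≤ r) (z : T) : |smoothing μ φ r z| ≤ 2 := by
  have hpos : 0 ≤ ∫ y, tent r z y ∂μ := integral_nonneg fun y => tent_nonneg _ _ _
  rw [smoothing, tentAvg, abs_div, abs_of_nonneg hpos]
  refine div_le_of_le_mul₀ hpos zero_le_two ?_
  rw [← integral_const_mul]
  refine norm_integral_le_of_norm_le
    (f := fun y => tent r z y * (balRep (φ y - φ z) - fracRep (φ y)))
    ((integrable_tent hr z).const_mul 2) (ae_of_all _ fun y => ?_)
  rw [norm_mul, Real.norm_of_nonneg (tent_nonneg _ _ _), mul_comm]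
  exact mul_le_mul_of_nonneg_right (abs_balRep_sub_fracRep_le _ _) (tent_nonneg _ _ _)

lemma integrable_balRep_sub_fracRep (hφ : Continuous φ) (z : T) :
    Integrable (fun y => balRep (φ y - φ z) - fracRep (φ y)) μ :=
  .of_bound ((measurable_balRep_sub hφ z).sub
    (measurable_fracRep.comp hφ.measurable)).aestronglyMeasurable 2
    (ae_of_all _ fun _ => abs_balRep_sub_fracRep_le _ _)

lemma IsUniformlyDoubling.add_smoothing_eq {D : ℝ≥0} (h : IsUniformlyDoubling μ D)
    (hφ : Continuous φ) {z z' : T} (hd : dist z z' < r)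
    (hφr : ∀ y w, dist y w < 2 * r → ‖φ y - φ w‖ < 1 / 4) {l l' : ℝ}
    (hl : (l : UnitAddCircle) = φ z) (hl' : (l' : UnitAddCircle) = φ z') (hll' : |l' - l| < 1 / 2) :
    l' + smoothing μ φ r z' = l + tentAvg μ r z' fun y => balRep (φ y - φ z) - fracRep (φ y) := by
  have hr : 0 < r := dist_nonneg.trans_lt hd
  have hbal : balRep (φ z' - φ z) = l' - l := by
    rw [abs_lt] at hll'
    rw [← hl, ← hl', ← AddCircle.coe_sub]
    exact balRep_coe ⟨by linarith, by linarith⟩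
  have hshift : smoothing μ φ r z' =
      tentAvg μ r z' (fun y => balRep (φ y - φ z) - fracRep (φ y) - (l' - l)) := by
    refine tentAvg_congr hr fun y hy => ?_
    rw [mem_ball] at hy
    rw [← hbal, ← balRep_sub_balRep
      (hφr y z (by linarith [dist_triangle y z' z, dist_comm z z'])) (hφr y z' (by linarith))]
    ring
  rw [hshift, h.tentAvg_sub_const hr z' (integrable_balRep_sub_fracRep hφ z)]
  ring

end Smoothing

/-- The continuous function `fracRep u + balRep (φ - u)` lifts `φ` along the path, so it takes
the integer value `k` only at points of the level set. -/
lemma separates_preimage_zero {T : Type*} [PseudoMetricSpace T] {φ : T → UnitAddCircle}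
    (hφ : Continuous φ) {W : Set T} {u : UnitAddCircle} (hW : ∀ y ∈ W, ‖φ y - u‖ < 1 / 2) (k : ℤ) :
    Separates (φ ⁻¹' {0}) {y | (k : ℝ) ≤ fracRep u + balRep (φ y - u)} W := by
  intro γ hγ hne
  set q : ℝ → ℝ := fun t => fracRep u + balRep (φ (γ.toFun t) - u)
  have hqc : ContinuousOn q (Icc γ.a γ.b) := continuousOn_const.add fun t ht =>
    (continuousAt_balRep (hW _ (hγ t ht))).comp_continuousWithinAt
      (f := fun t => φ (γ.toFun t) - u) <|
      (hφ.continuousAt.comp_continuousWithinAt (γ.lip.continuousOn t ht)).sub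
        continuousWithinAt_const
  have hne' : ¬((k : ℝ) ≤ q γ.a ↔ (k : ℝ) ≤ q γ.b) := hne
  have hk : (k : ℝ) ∈ uIcc (q γ.a) (q γ.b) := by
    rw [mem_uIcc]
    grind
  obtain ⟨t, ht, htk⟩ := intermediate_value_uIcc (by rwa [uIcc_of_le γ.hab]) hk
  rw [uIcc_of_le γ.hab] at ht
  refine ⟨γ.toFun t, ?_, t, ht, rfl⟩
  rw [mem_preimage, mem_singleton_iff, ← coe_fracRep_add_balRep_sub u (φ (γ.toFun t)),
    ← intCast_coe_eq_zero k, ← htk]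

theorem IsPIMeasure.edist_add_smoothing_le {T : Type*} [MetricSpace T] [MeasurableSpace T]
    [OpensMeasurableSpace T] {μ : Measure T} [IsFiniteMeasure μ] {D K : ℝ≥0} {Λ : ℝ}
    (h : IsPIMeasure μ D K Λ) {φ : T → UnitAddCircle} (hφ : Continuous φ) {r : ℝ}
    (hφr : ∀ y w, dist y w < 4 * Λ * r → ‖φ y - φ w‖ < 1 / 4)
    (hS : codimH μ (φ ⁻¹' {0}) ≠ ⊤) {z z' : T} (hd : dist z z' < r) {l l' : ℝ}
    (hl : (l : UnitAddCircle) = φ z) (hl' : (l' : UnitAddCircle) = φ z') (hll' : |l' - l| < 1 / 2) :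
    edist (l + smoothing μ φ r z) (l' + smoothing μ φ r z') ≤
      tentConst D K * codimH μ (φ ⁻¹' {0} ∩ ball z (4 * Λ * r)) / μ (ball z r) * edist z z' := by
  have hr : 0 < r := dist_nonneg.trans_lt hd
  have hΛr : 2 * r ≤ 4 * Λ * r := by nlinarith [h.one_le_Λ]
  have hφr₂ (y w : T) (hyw : dist y w < 2 * r) : ‖φ y - φ w‖ < 1 / 4 := hφr y w (by linarith)
  obtain ⟨k, hk⟩ := exists_balRep_sub_fracRep_eq (φ z)
  rw [h.add_smoothing_eq hφ hd hφr₂ hl hl' hll', edist_add_left]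
  refine h.edist_tentAvg_le (E := {y | (k : ℝ) ≤ fracRep (φ z) + balRep (φ y - φ z)})
    (measurableSet_le measurable_const ((measurable_balRep_sub hφ z).const_add _)) hd
    (integrable_balRep_sub_fracRep hφ z) (fun y hy => hk _ ?_)
    (separates_preimage_zero hφ (fun y hy => ?_) k)
    (ne_top_of_le_ne_top hS (codimH_mono inter_subset_left))
  · linarith [hφr₂ y z hy]
  · linarith [hφr y z hy]

/-! ### Membership in the class `F` -/

section WeakUpperGradient

variable {X Y : Type*} [PseudoMetricSpace X] [MeasurableSpace X] [PseudoEMetricSpace Y]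
  {μ : Measure X} {p : ℝ} {f : X → Y} {q : X → ℝ≥0∞}

lemma pathMod_empty (hp : 0 < p) : pathMod μ p ∅ = 0 :=
  le_antisymm (iInf₂_le_of_le 0 ⟨measurable_const, fun _ h => h.elim⟩
    (by simp [ENNReal.zero_rpow_of_pos hp])) bot_le

lemma IsUpperGradient.isWeakUpperGradient (h : IsUpperGradient f q) (hp : 0 < p) :
    IsWeakUpperGradient μ p f q := by
  rw [IsWeakUpperGradient]
  convert pathMod_empty (μ := μ) hp
  exact eq_empty_of_forall_notMem fun γ hγ => hγ (h γ)

lemma IsUpperGradient.isWeakUpperGradientOn (h : IsUpperGradient f q) (hp : 0 < p) (U : Set X) :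
    IsWeakUpperGradientOn μ p U f q := by
  rw [IsWeakUpperGradientOn]
  convert pathMod_empty (μ := μ.restrict U) hp
  exact eq_empty_of_forall_notMem fun γ hγ => hγ.2 (h γ)

end WeakUpperGradient

lemma setLIntegral_rpow_lt_top {X : Type*} [MeasurableSpace X] {μ : Measure X} {U : Set X}
    (hU : MeasurableSet U) (hμU : μ U < ⊤) {g : X → ℝ≥0∞} {c : ℝ≥0∞} (hc : c ≠ ⊤)
    (hg : ∀ x ∈ U, g x ≤ c) {p : ℝ} (hp : 0 ≤ p) : ∫⁻ x in U, g x ^ p ∂μ < ⊤ :=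
  calc ∫⁻ x in U, g x ^ p ∂μ ≤ ∫⁻ _ in U, c ^ p ∂μ :=
        setLIntegral_mono' hU fun x hx => ENNReal.rpow_le_rpow (hg x hx) hp
    _ = c ^ p * μ U := setLIntegral_const _ _
    _ < ⊤ := ENNReal.mul_lt_top (ENNReal.rpow_lt_top_of_nonneg hp hc) hμU

lemma IsUpperGradient.memNloc {X : Type*} [PseudoMetricSpace X] [MeasurableSpace X]
    [OpensMeasurableSpace X] {μ : Measure X} [IsLocallyFiniteMeasure μ] {f : X → ℝ}
    {q : X → ℝ≥0∞} (h : IsUpperGradient f q) (hq : Measurable q) {c : ℝ≥0∞} (hc : c ≠ ⊤)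
    (hqc : ∀ x, q x ≤ c) (hf : ∀ A, IsCompact A → ∃ b, ∀ x ∈ A, |f x| ≤ b) {p : ℝ} (hp : 0 < p) :
    MemNloc μ p f := by
  intro U hU hUc
  have hμU : μ U < ⊤ := (measure_mono subset_closure).trans_lt hUc.measure_lt_top
  obtain ⟨b, hb⟩ := hf _ hUc
  exact ⟨setLIntegral_rpow_lt_top hU.measurableSet hμU ENNReal.ofReal_ne_top
      (fun x hx => ENNReal.ofReal_le_ofReal (hb x (subset_closure hx))) hp.le,
    q, hq, h.isWeakUpperGradientOn hp U,
    setLIntegral_rpow_lt_top hU.measurableSet hμU hc (fun x _ => hqc x) hp.le⟩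

lemma IsLiftedMeasure.isLocallyFiniteMeasure {T Tt : Type*} [MetricSpace T]
    [MeasurableSpace T] [MetricSpace Tt] [MeasurableSpace Tt] [OpensMeasurableSpace Tt]
    {π : Tt → T} {μ : Measure T} [IsFiniteMeasure μ] {μt : Measure Tt}
    (hμ : IsLiftedMeasure π μ μt) (hπ : IsLocalIsometry π) : IsLocallyFiniteMeasure μt := by
  refine ⟨fun x => ?_⟩
  obtain ⟨ε, hε, h⟩ := hπ x
  have hfiber (y : T) : (π ⁻¹' {y} ∩ ball x ε).encard ≤ 1 :=
    encard_le_one_iff.2 fun a b ha hb => by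
      rw [← dist_eq_zero, ← h a ha.2 b hb.2, ha.1, hb.1, dist_self]
  refine ⟨ball x ε, ball_mem_nhds x hε, ?_⟩
  rw [hμ _ measurableSet_ball]
  calc ∫⁻ y, ((π ⁻¹' {y} ∩ ball x ε).encard : ℝ≥0∞) ∂μ ≤ ∫⁻ _, 1 ∂μ :=
        lintegral_mono fun y => (ENat.toENNReal_le.2 (hfiber y)).trans_eq ENat.toENNReal_one
    _ < ⊤ := by simp

section BallSum

variable {T : Type*} [PseudoMetricSpace T]

/-- The sum of the multiples `M i` of the indicator functions of the balls of radius `r`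
centred at the points of `s`. -/
def ballSum (s : Finset T) (M : T → ℝ≥0∞) (r : ℝ) (x : T) : ℝ≥0∞ :=
  ∑ i ∈ s, (ball i r).indicator (fun _ => M i) x

lemma ballSum_le (s : Finset T) (M : T → ℝ≥0∞) (r : ℝ) (x : T) :
    ballSum s M r x ≤ ∑ i ∈ s, M i :=
  Finset.sum_le_sum fun _ _ => indicator_le_self _ _ _

lemma le_ballSum {s : Finset T} {M : T → ℝ≥0∞} {r : ℝ} {i x : T} (hi : i ∈ s)
    (hx : x ∈ ball i r) : M i ≤ ballSum s M r x := by
  have hle := Finset.single_le_sum (f := fun i => (ball i r).indicator (fun _ => M i) x)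
    (fun _ _ => zero_le) hi
  rwa [indicator_of_mem hx] at hle

variable [MeasurableSpace T] [OpensMeasurableSpace T]

lemma measurable_ballSum (s : Finset T) (M : T → ℝ≥0∞) (r : ℝ) : Measurable (ballSum s M r) :=
  Finset.measurable_fun_sum _ fun _ _ => measurable_const.indicator measurableSet_ball

lemma lintegral_mul_ballSum {μ : Measure T} {g : T → ℝ≥0∞} (hg : Measurable g) (s : Finset T)
    (M : T → ℝ≥0∞) (r : ℝ) :
    ∫⁻ x, g x * ballSum s M r x ∂μ = ∑ i ∈ s, M i * ∫⁻ x in ball i r, g x ∂μ := by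
  simp_rw [ballSum, Finset.mul_sum]
  rw [lintegral_finsetSum (f := fun i x => g x * (ball i r).indicator (fun _ => M i) x) _
    fun i _ => hg.mul (measurable_const.indicator measurableSet_ball)]
  refine Finset.sum_congr rfl fun i _ => ?_
  rw [← lintegral_const_mul _ hg, ← lintegral_indicator measurableSet_ball]
  refine lintegral_congr fun x => ?_
  by_cases hx : x ∈ ball i r
  · simp [hx, mul_comm]
  · simp [hx]

end BallSum

/-! ### A competitor concentrated near a level set -/

section NetWeight

variable {T : Type*} [MetricSpace T] [MeasurableSpace T] {μ : Measure T} {D A : ℝ≥0} {S : Set T}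
  {r R : ℝ}

/-- The ratio of the codimension 1 content of `S` near `i` to the measure of a small ball at `i`,
scaled by `A`: a bound for the slope near `i` of a function whose variation comes from `S`. -/
def netWeight (μ : Measure T) (A : ℝ≥0) (S : Set T) (r R : ℝ) (i : T) : ℝ≥0∞ :=
  A * codimH μ (S ∩ ball i R) / μ (ball i r)

lemma IsUniformlyDoubling.netWeight_ne_top (h : IsUniformlyDoubling μ D) (hS : codimH μ S ≠ ⊤)
    (hr : 0 < r) (i : T) : netWeight μ A S r R i ≠ ⊤ :=
  ENNReal.div_ne_top (ENNReal.mul_ne_top ENNReal.coe_ne_top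
    (ne_top_of_le_ne_top hS (codimH_mono inter_subset_left))) (h.ball_pos i r hr).ne'

lemma restrMax_mono {R R' : ℝ≥0∞} (h : R ≤ R') (g : T → ℝ≥0∞) (x : T) :
    restrMax μ R g x ≤ restrMax μ R' g x :=
  iSup₂_mono' fun s hs => ⟨s, ⟨hs.1, hs.2.trans h⟩, le_rfl⟩

lemma setLIntegral_ball_div_le_restrMax (hr : 0 < r) (g : T → ℝ≥0∞) (x : T) :
    (∫⁻ y in ball x r, g y ∂μ) / μ (ball x r) ≤ restrMax μ (ENNReal.ofReal r) g x :=
  le_iSup₂_of_le r ⟨hr, le_rfl⟩ le_rfl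

lemma IsUniformlyDoubling.setLIntegral_div_le_restrMax (h : IsUniformlyDoubling μ D) (hr : 0 < r)
    {k : ℕ} (hk : 2 * R + r ≤ 2 ^ k * r) (g : T → ℝ≥0∞) {i y : T} (hy : y ∈ ball i R) :
    (∫⁻ x in ball i r, g x ∂μ) / (D ^ k * μ (ball i r)) ≤
      restrMax μ (ENNReal.ofReal (R + r)) g y := by
  have hyi : dist y i < R := hy
  have hR : 0 < R := dist_nonneg.trans_lt hyi
  refine le_trans ?_ (setLIntegral_ball_div_le_restrMax (by linarith) g y)
  refine ENNReal.div_le_div (lintegral_mono_set (ball_subset_ball' ?_))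
    (h.measure_ball_le_pow_mul k hr ?_)
  · linarith [dist_comm i y]
  · linarith

lemma IsUniformlyDoubling.lintegral_mul_ballSum_netWeight_le [OpensMeasurableSpace T]
    [IsFiniteMeasure μ] [Nonempty T] (h : IsUniformlyDoubling μ D) (hr : 0 < r) {k : ℕ}
    (hk : 2 * R + r ≤ 2 ^ k * r)
    {s : Finset T} {N : ℝ≥0∞} (hN₀ : N ≠ 0) (hNt : N ≠ ⊤)
    (hN : ∀ c, ((s.filter fun x => dist c x < R + r).card : ℝ≥0∞) ≤ N)
    {g : T → ℝ≥0∞} (hg : Measurable g) :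
    ∫⁻ x, g x * ballSum s (netWeight μ A S r R) r x ∂μ ≤
      A * D ^ k * N * choquetIntegral μ S (restrMax μ (ENNReal.ofReal (R + r)) g) := by
  have hDk : (D : ℝ≥0∞) ^ k ≠ 0 :=
    pow_ne_zero _ (by exact_mod_cast (zero_lt_one.trans_le h.one_le).ne')
  set m : T → ℝ≥0∞ := fun i => (∫⁻ x in ball i r, g x ∂μ) / (D ^ k * μ (ball i r)) with hm
  have hterm (i : T) : netWeight μ A S r R i * ∫⁻ x in ball i r, g x ∂μ =
      A * D ^ k * (m i * codimH μ (S ∩ ball i R)) := by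
    have hmi : D ^ k * m i = (∫⁻ x in ball i r, g x ∂μ) / μ (ball i r) := by
      rw [hm, ← mul_div_assoc, ENNReal.mul_div_mul_left _ _ hDk (by finiteness)]
    calc netWeight μ A S r R i * ∫⁻ x in ball i r, g x ∂μ
        = A * ((∫⁻ x in ball i r, g x ∂μ) / μ (ball i r)) * codimH μ (S ∩ ball i R) := by
          simp only [netWeight, div_eq_mul_inv]
          ring
      _ = A * D ^ k * (m i * codimH μ (S ∩ ball i R)) := by
          rw [← hmi]
          ring
  calc ∫⁻ x, g x * ballSum s (netWeight μ A S r R) r x ∂μ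
      = A * D ^ k * ∑ i ∈ s, m i * codimH μ (S ∩ ball i R) := by
        simp only [lintegral_mul_ballSum hg, hterm, Finset.mul_sum]
    _ ≤ A * D ^ k * (N * choquetIntegral μ S (restrMax μ (ENNReal.ofReal (R + r)) g)) := by
        gcongr
        exact sum_mul_codimH_inter_ball_le (lt_add_of_pos_right R hr) hN₀ hNt hN
          fun i _ y hy => h.setLIntegral_div_le_restrMax hr hk g hy.2
    _ = _ := (mul_assoc _ _ _).symm

end NetWeight

section Competitor

variable {T Tt : Type*} [MetricSpace T] [MeasurableSpace T] [OpensMeasurableSpace T]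
  [MetricSpace Tt] {μ : Measure T} [IsFiniteMeasure μ] {D K : ℝ≥0} {Λ r : ℝ}
  {φ : T → UnitAddCircle} {π : Tt → T} {F : Tt → ℝ} {s : Finset T}

lemma IsPIMeasure.edist_add_smoothing_le_netWeight (h : IsPIMeasure μ D K Λ) (hφ : Continuous φ)
    (hφr : ∀ y w, dist y w < 4 * Λ * r → ‖φ y - φ w‖ < 1 / 4) (hS : codimH μ (φ ⁻¹' {0}) ≠ ⊤)
    {i z z' : T} (hi : dist z i < r) (hd : dist z z' < r) {l l' : ℝ}
    (hl : (l : UnitAddCircle) = φ z) (hl' : (l' : UnitAddCircle) = φ z') (hll' : |l' - l| < 1 / 2) :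
    edist (l + smoothing μ φ r z) (l' + smoothing μ φ r z') ≤
      netWeight μ (tentConst D K * D) (φ ⁻¹' {0}) r (5 * Λ * r) i * edist z z' := by
  have hr : 0 < r := dist_nonneg.trans_lt hd
  have hΛr : r ≤ Λ * r := le_mul_of_one_le_left hr.le h.one_le_Λ
  have hball : μ (ball i r) ≤ D * μ (ball z r) := by
    simpa using h.measure_ball_le_pow_mul 1 (x := i) (y := z) (R := r) hr
      (by linarith [dist_comm i z])
  have hinv : (μ (ball z r))⁻¹ ≤ D / μ (ball i r) := by
    rw [ENNReal.le_div_iff_mul_le (.inl (h.ball_pos i r hr).ne') (.inl (measure_ne_top μ _)),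
      mul_comm, ← div_eq_mul_inv]
    exact ENNReal.div_le_of_le_mul hball
  have hsub : φ ⁻¹' {0} ∩ ball z (4 * Λ * r) ⊆ φ ⁻¹' {0} ∩ ball i (5 * Λ * r) :=
    inter_subset_inter_right _ (ball_subset_ball' (by linarith))
  calc edist (l + smoothing μ φ r z) (l' + smoothing μ φ r z')
      ≤ tentConst D K * codimH μ (φ ⁻¹' {0} ∩ ball z (4 * Λ * r)) * (μ (ball z r))⁻¹ *
          edist z z' := h.edist_add_smoothing_le hφ hφr hS hd hl hl' hll'
    _ ≤ tentConst D K * codimH μ (φ ⁻¹' {0} ∩ ball i (5 * Λ * r)) * (D / μ (ball i r)) *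
          edist z z' := by
        gcongr
        exact codimH_mono hsub
    _ = netWeight μ (tentConst D K * D) (φ ⁻¹' {0}) r (5 * Λ * r) i * edist z z' := by
        simp only [netWeight, ENNReal.coe_mul, div_eq_mul_inv]
        ring

lemma IsPIMeasure.isUpperGradient_add_smoothing (h : IsPIMeasure μ D K Λ) (hφ : Continuous φ)
    (hφr : ∀ y w, dist y w < 4 * Λ * r → ‖φ y - φ w‖ < 1 / 4) (hS : codimH μ (φ ⁻¹' {0}) ≠ ⊤)
    (hr : 0 < r) (hs : ∀ y, ∃ i ∈ s, dist y i < r) (hπ : IsLocalIsometry π) (hπc : Continuous π)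
    (hF : Continuous F) (hFφ : ∀ x, (F x : UnitAddCircle) = φ (π x)) :
    IsUpperGradient (fun x => F x + smoothing μ φ r (π x))
      (ballSum s (netWeight μ (tentConst D K * D) (φ ⁻¹' {0}) r (5 * Λ * r)) r ∘ π) := by
  refine isUpperGradient_of_local fun x => ?_
  obtain ⟨ε, hε, hiso⟩ := hπ x
  obtain ⟨i, his, hxi⟩ := hs (π x)
  refine ⟨ball x ε ∩ F ⁻¹' ball (F x) (1 / 4) ∩ π ⁻¹' (ball (π x) (r / 2) ∩ ball i r),
    inter_mem (inter_mem (ball_mem_nhds x hε)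
      (hF.continuousAt.preimage_mem_nhds (ball_mem_nhds _ (by norm_num))))
      (hπc.continuousAt.preimage_mem_nhds
        (inter_mem (ball_mem_nhds _ (by positivity)) (isOpen_ball.mem_nhds hxi))),
    _, fun y hy => le_ballSum his hy.2.2, ?_⟩
  rintro y ⟨⟨hyε, hyF⟩, hyr, hyi⟩ y' ⟨⟨hyε', hyF'⟩, hyr', -⟩
  simp only [mem_preimage, mem_ball] at hyF hyr hyi hyF' hyr'
  have hdist : edist (π y) (π y') = edist y y' := by
    rw [edist_dist, edist_dist, hiso y hyε y' hyε']
  have hFy : |F y' - F y| < 1 / 2 := by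
    rw [← Real.dist_eq]
    linarith [dist_triangle_right (F y') (F y) (F x)]
  rw [← hdist]
  exact h.edist_add_smoothing_le_netWeight hφ hφr hS hyi
    (by linarith [dist_triangle_right (π y) (π y') (π x)]) (hFφ y) (hFφ y') hFy

lemma IsPIMeasure.memF_ballSum_netWeight [BorelSpace T] [MeasurableSpace Tt]
    [OpensMeasurableSpace Tt] {μt : Measure Tt} {τ : Tt → Tt} (h : IsPIMeasure μ D K Λ)
    (hφ : Continuous φ) (hφr : ∀ y w, dist y w < 4 * Λ * r → ‖φ y - φ w‖ < 1 / 4)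
    (hS : codimH μ (φ ⁻¹' {0}) ≠ ⊤) (hr : 0 < r) (hs : ∀ y, ∃ i ∈ s, dist y i < r)
    (hπ : IsLocalIsometry π) (hπc : Continuous π)
    (hμ : IsLiftedMeasure π μ μt) (hπτ : ∀ x, π (τ x) = π x) (hF : Continuous F)
    (hFφ : ∀ x, (F x : UnitAddCircle) = φ (π x)) (hFτ : ∀ x, F (τ x) = F x + 1) {p : ℝ}
    (hp : 0 < p) :
    MemF π τ μt p (ballSum s (netWeight μ (tentConst D K * D) (φ ⁻¹' {0}) r (5 * Λ * r)) r) := by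
  have hloc := hμ.isLocallyFiniteMeasure hπ
  have hug := h.isUpperGradient_add_smoothing hφ hφr hS hr hs hπ hπc hF hFφ
  have hmeas := measurable_ballSum s
    (netWeight μ (tentConst D K * D) (φ ⁻¹' {0}) r (5 * Λ * r)) r
  refine ⟨hmeas, _, hug.memNloc (hmeas.comp hπc.measurable)
    (ENNReal.sum_ne_top.2 fun i _ => h.netWeight_ne_top hS hr i) (fun x => ballSum_le _ _ _ _)
    (fun A hA => ?_) hp, ae_of_all _ fun x => ?_, hug.isWeakUpperGradient hp⟩
  · obtain ⟨b, hb⟩ := hA.exists_bound_of_continuousOn hF.continuousOn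
    exact ⟨b + 2, fun x hx => (abs_add_le _ _).trans
      (add_le_add (hb x hx) (abs_smoothing_le hr.le _))⟩
  · simp only [hπτ, hFτ]
    ring

end Competitor

/-- `49 * Λ ≤ 2 ^ k` makes `D ^ k` bound both the overlap of the balls of radius `6 * Λ * r`
centred on an `r / 2`-separated net and the measure ratios of balls of radii `6 * Λ * r`, `r`. -/
theorem IsPIMeasure.exists_memF_lintegral_mul_le {T Tt : Type*} [MetricSpace T]
    [MeasurableSpace T] [BorelSpace T] [CompactSpace T] [Nonempty T] [MetricSpace Tt]
    [MeasurableSpace Tt] [OpensMeasurableSpace Tt] {μ : Measure T} [IsFiniteMeasure μ]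
    {D K : ℝ≥0} {Λ r : ℝ}
    (h : IsPIMeasure μ D K Λ) {φ : T → UnitAddCircle} (hφ : Continuous φ)
    (hφr : ∀ y w, dist y w < 4 * Λ * r → ‖φ y - φ w‖ < 1 / 4) (hS : codimH μ (φ ⁻¹' {0}) ≠ ⊤)
    (hr : 0 < r) {k : ℕ} (hk : 49 * Λ ≤ 2 ^ k) {μt : Measure Tt} {π : Tt → T} {τ : Tt → Tt}
    (hπ : IsLocalIsometry π) (hπc : Continuous π) (hμ : IsLiftedMeasure π μ μt)
    (hπτ : ∀ x, π (τ x) = π x) {F : Tt → ℝ} (hF : Continuous F)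
    (hFφ : ∀ x, (F x : UnitAddCircle) = φ (π x)) (hFτ : ∀ x, F (τ x) = F x + 1) :
    ∃ ρ, (∀ p : ℝ, 0 < p → MemF π τ μt p ρ ∧ ∫⁻ x, ρ x ^ p ∂μ < ⊤) ∧
      ∀ g : T → ℝ≥0∞, Measurable g → ∫⁻ x, g x * ρ x ∂μ ≤
        (tentConst D K * D * D ^ k * D ^ k : ℝ≥0) *
          choquetIntegral μ (φ ⁻¹' {0}) (restrMax μ (ENNReal.ofReal (6 * Λ * r)) g) := by
  have hΛr : r ≤ Λ * r := le_mul_of_one_le_left hr.le h.one_le_Λ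
  have hkr : 49 * Λ * r ≤ 2 ^ k * r := by gcongr
  lift r to ℝ≥0 using hr.le
  have hε : 0 < r / 2 := by exact_mod_cast half_pos hr
  obtain ⟨s, hsep, hcov⟩ := exists_finset_isSeparated_isCover T hε.ne'
  have hs (y : T) : ∃ i ∈ s, dist y i < r := by
    obtain ⟨i, hi, hyi⟩ := mem_iUnion₂.1 (hcov.subset_iUnion_closedBall (mem_univ y))
    refine ⟨i, hi, (mem_closedBall.1 hyi).trans_lt ?_⟩
    push_cast
    linarith
  have hD : (D : ℝ≥0∞) ^ k ≠ 0 :=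
    pow_ne_zero _ (by exact_mod_cast (zero_lt_one.trans_le h.one_le).ne')
  refine ⟨_, fun p hp => ⟨h.memF_ballSum_netWeight hφ hφr hS hr hs hπ hπc hμ hπτ hF hFφ hFτ hp, ?_⟩,
    fun g hg => ?_⟩
  · rw [← setLIntegral_univ]
    exact setLIntegral_rpow_lt_top .univ (measure_lt_top μ _)
      (ENNReal.sum_ne_top.2 fun i _ => h.netWeight_ne_top hS hr i)
      (fun x _ => ballSum_le _ _ _ _) hp.le
  · refine (h.lintegral_mul_ballSum_netWeight_le hr (k := k) (by linarith) hD (by finiteness)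
      (h.card_filter_dist_lt_le hε hsep (by push_cast; linarith)) hg).trans ?_
    push_cast
    gcongr with x
    exact choquetIntegral_mono fun x _ => restrMax_mono (ENNReal.ofReal_le_ofReal (by linarith)) _ _

lemma exists_nat_forall_norm_sub_lt {T E : Type*} [PseudoMetricSpace T] [CompactSpace T]
    [SeminormedAddCommGroup E] {φ : T → E} (hφ : Continuous φ) (c : ℝ) {ε : ℝ} (hε : 0 < ε) :
    ∃ N : ℕ, ∀ n : ℕ, N ≤ n → 0 < n ∧ ∀ y w, dist y w < c * (1 / n) → ‖φ y - φ w‖ < ε := by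
  obtain ⟨δ, hδ, hδφ⟩ := Metric.uniformContinuous_iff.1
    (CompactSpace.uniformContinuous_of_continuous hφ) ε hε
  have hlim : Tendsto (fun n : ℕ => c * (1 / (n : ℝ))) atTop (𝓝 0) := by
    simpa using tendsto_one_div_atTop_nhds_zero_nat.const_mul c
  refine eventually_atTop.1 ?_
  filter_upwards [eventually_gt_atTop 0, hlim.eventually_lt_const hδ] with n hn hnδ
  refine ⟨hn, fun y w hyw => ?_⟩
  rw [← dist_eq_norm]
  exact hδφ (hyw.trans hnδ)

end Duality

open Duality in
theorem statement9_general (Cμ : ℝ≥0∞) (CP lP : ℝ) :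
    ∃ C : ℝ≥0∞, 0 < C ∧ C < ⊤ ∧
      ∀ (T : Type*) [MetricSpace T] [MeasurableSpace T] [BorelSpace T] [CompactSpace T]
        (Tt : Type*) [MetricSpace Tt] [MeasurableSpace Tt] [OpensMeasurableSpace Tt]
        (μ : Measure T) (μt : Measure Tt) (x₀ : T) (α₀ : Path x₀ x₀) (π : Tt → T) (τ : Tt → Tt),
        IsDoubling μ Cμ → SupportsPoincare μ CP lP → CoverSetup π → IsDeck π x₀ α₀ τ →
        IsLiftedMeasure π μ μt →
        ∀ S ∈ Surfaces μ x₀ α₀, ∃ N : ℕ, ∀ n : ℕ, N ≤ n → ∃ ρ : T → ℝ≥0∞,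
          (∀ p : ℝ, 0 < p → MemF π τ μt p ρ ∧ ∫⁻ x, ρ x ^ p ∂μ < ⊤) ∧
          ∀ g : T → ℝ≥0∞, Measurable g →
            ∫⁻ x, g x * ρ x ∂μ ≤ C * choquetIntegral μ S (restrMax μ (C / (n : ℝ≥0∞)) g) := by
  obtain ⟨D, K, Λ, hPI⟩ := exists_isPIMeasure_constants Cμ CP lP
  obtain ⟨k, hk⟩ := pow_unbounded_of_one_lt (49 * Λ) one_lt_two
  set A : ℝ≥0 := tentConst D K * D * D ^ k * D ^ k
  refine ⟨max (ENNReal.ofReal (6 * Λ)) A + 1, by simp, by finiteness, ?_⟩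
  set C : ℝ≥0∞ := max (ENNReal.ofReal (6 * Λ)) A + 1
  have hΛC : ENNReal.ofReal (6 * Λ) ≤ C := (le_max_left _ _).trans le_self_add
  have hAC : (A : ℝ≥0∞) ≤ C := (le_max_right _ _).trans le_self_add
  rintro T _ _ _ _ Tt _ _ _ μ μt x₀ α₀ π τ hdoub hpoinc ⟨hcov, hsurj, hiso, _⟩ hτ hμ _
    ⟨φ, hφ, rfl, hS⟩
  have := hφ.nontrivial one_ne_zero
  have := hpoinc.isFiniteMeasure
  have h := hPI T μ hdoub hpoinc
  have := hsurj.pathConnectedSpace hcov.continuous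
  have := h.locallyPathConnectedSpace
  obtain ⟨F, hF, hFφ⟩ := exists_continuous_lift hcov.isLocalHomeomorph hφ.1
  obtain ⟨N, hN⟩ := exists_nat_forall_norm_sub_lt hφ.1 (4 * Λ) (ε := 1 / 4) (by norm_num)
  refine ⟨N, fun n hn => ?_⟩
  obtain ⟨hn₀, hφn⟩ := hN n hn
  obtain ⟨ρ, hρ, hρg⟩ := h.exists_memF_lintegral_mul_le hφ.1 hφn hS.ne (by positivity) hk.le
    hiso hcov.continuous hμ hτ.2.1 hF hFφ (by simpa using lift_deck_eq_add hcov hτ hφ hF hFφ)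
  refine ⟨ρ, hρ, fun g hg => (hρg g hg).trans (mul_le_mul' hAC
    (choquetIntegral_mono fun x _ => restrMax_mono ?_ _ x))⟩
  rw [mul_one_div, ENNReal.ofReal_div_of_pos (by positivity), ENNReal.ofReal_natCast]
  gcongr

open Duality in
/-- Inequality (4.1): `cap_p T ≤ C ∫_S M_{C/n} (ρ₀^{p-1}) dH` for every `S ∈ Γ*` and
all large enough `n`. -/
theorem statement9 (Cμ : ℝ≥0∞) (CP lP : ℝ) :
    ∃ C : ℝ≥0∞, 0 < C ∧ C < ⊤ ∧
      ∀ (T : Type) [MetricSpace T] [MeasurableSpace T] [BorelSpace T] [CompactSpace T]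
        (Tt : Type) [MetricSpace Tt] [MeasurableSpace Tt] [BorelSpace Tt]
        (μ : Measure T) (μt : Measure Tt) (x₀ : T) (α₀ : Path x₀ x₀)
        (π : Tt → T) (τ : Tt → Tt),
        Standing μ Cμ CP lP x₀ α₀ → CoverSetup π → IsDeck π x₀ α₀ τ →
        IsLiftedMeasure π μ μt →
        ∀ p : ℝ, 1 < p →
          ∀ ρ₀ : T → ℝ≥0∞,
            MemF π τ μt p ρ₀ →
            cap μ p x₀ α₀ = ∫⁻ x, ρ₀ x ^ p ∂μ →
            (∀ ρ : T → ℝ≥0∞, MemF π τ μt p ρ → (∫⁻ x, ρ x ^ p ∂μ) < ⊤ →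
              cap μ p x₀ α₀ ≤ ∫⁻ x, ρ₀ x ^ (p - 1) * ρ x ∂μ) →
            ∀ S ∈ Surfaces μ x₀ α₀, ∃ N : ℕ, ∀ n : ℕ, N ≤ n →
              cap μ p x₀ α₀ ≤
                C * choquetIntegral μ S
                  (restrMax μ (C / (n : ℝ≥0∞)) fun x => ρ₀ x ^ (p - 1)) := by
  obtain ⟨C, hC₀, hC, h⟩ := statement9_general Cμ CP lP
  refine ⟨C, hC₀, hC, fun T _ _ _ _ Tt _ _ _ μ μt x₀ α₀ π τ hT hπ hτ hμ p hp ρ₀ hρ₀ _ hmin S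
    hS => ?_⟩
  refine (h T Tt μ μt x₀ α₀ π τ hT.1 hT.2.1 hπ hτ hμ S hS).imp fun N hN n hn => ?_
  obtain ⟨ρ, hρF, hρ⟩ := hN n hn
  obtain ⟨hF, hint⟩ := hρF p (one_pos.trans hp)
  exact (hmin ρ hF hint).trans (hρ _ (hρ₀.1.pow_const _))
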